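/- arXiv:1707.00038 — 2 statements merged into one kernel-verified Lean document; each statement's English description precedes it below -/
import Mathlib

section
/- (Aronson–Golubitsky–Mallet-Paret) Let N ≥ 1, β > 0, and I > 1. Then there exist T > 0 and a running function ψ of period T satisfying the delay-differential equation β ψ''(t) + ψ'(t) + sin(ψ(t)) + (1/N) Σ_{k=0}^{N−1} ψ'(t − kT/N) = I for all t ∈ ℝ; equivalently, the resistively loaded array β φ_k'' + φ_k' + sin(φ_k) + (1/N) Σ_{j=1}^N φ_j' = I admits a discrete rotating wave (pony-on-a-merry-go-round) solution φ_j(t) = ψ(t − (j−1)T/N). -/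
open Real

/-- `ψ` is a running function of period `T`: `ψ (t + T) = ψ t + 2π` for all `t`. -/
def IsRunning (ψ : ℝ → ℝ) (T : ℝ) : Prop :=
  ∀ t : ℝ, ψ (t + T) = ψ t + 2 * Real.pi

section Brouwer
open Set Metric MeasureTheory Topology

variable {E : Type*} [NormedAddCommGroup E] [InnerProductSpace ℝ E] [FiniteDimensional ℝ E]

lemma det_poly (L : E →L[ℝ] E) : ∃ p : Polynomial ℝ, p.natDegree ≤ Module.finrank ℝ E ∧
    ∀ t : ℝ, p.eval t = (1 + t • L).det := by
  classical
  let b := Module.finBasis ℝ E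
  let M := LinearMap.toMatrix b b (L : E →ₗ[ℝ] E)
  refine ⟨((Polynomial.X : Polynomial ℝ) • M.map Polynomial.C +
    (1 : Matrix _ _ ℝ).map Polynomial.C).det, ?_, fun t => ?_⟩
  · simpa using Polynomial.natDegree_det_X_add_C_le M 1
  · rw [← Polynomial.coe_evalRingHom, RingHom.map_det]
    have h1 : (1 + t • L).det = LinearMap.det ((1 + t • L : E →L[ℝ] E) : E →ₗ[ℝ] E) := rfl
    rw [h1, ← LinearMap.det_toMatrix b]
    congr 1
    have h2 : LinearMap.toMatrix b b ((1 + t • L : E →L[ℝ] E) : E →ₗ[ℝ] E) = t • M + 1 := by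
      have : ((1 + t • L : E →L[ℝ] E) : E →ₗ[ℝ] E) = t • (L : E →ₗ[ℝ] E) + 1 := by
        ext x; simp [add_comm]
      rw [this, map_add, map_smul, LinearMap.toMatrix_one]
    rw [h2]
    ext i j
    by_cases hij : i = j
    · subst hij; simp [mul_comm t]
    · simp [hij, mul_comm t]

lemma lagrange_weights (n : ℕ) (δ : ℝ) (hδ : 0 < δ) : ∃ (v : Fin (n + 1) → ℝ)
    (w : Fin (n + 1) → ℝ), (∀ i, 0 < v i ∧ v i < δ) ∧
    ∀ p : Polynomial ℝ, p.natDegree ≤ n → p.eval 1 = ∑ i, w i * p.eval (v i) := by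
  let v : Fin (n + 1) → ℝ := fun i => δ * ((i : ℝ) + 1) / (n + 2)
  have hn : (0 : ℝ) < n + 2 := by positivity
  have hv : Function.Injective v := by
    intro i j hij
    simp only [v] at hij
    field_simp at hij
    have : (i : ℝ) = j := by linarith
    exact Fin.ext (by exact_mod_cast this)
  refine ⟨v, fun i => (Lagrange.basis Finset.univ v i).eval 1, fun i => ⟨by positivity, ?_⟩, ?_⟩
  · simp only [v]
    rw [div_lt_iff₀ hn]
    have : (i : ℝ) < n + 1 := by exact_mod_cast i.2
    nlinarith
  · intro p hp
    have hd : p.degree < (Finset.univ : Finset (Fin (n + 1))).card := by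
      refine lt_of_le_of_lt Polynomial.degree_le_natDegree ?_
      rw [Finset.card_univ, Fintype.card_fin]
      exact_mod_cast Nat.lt_succ_of_le hp
    have := Lagrange.eq_interpolate (s := Finset.univ) (v := v) hv.injOn hd
    conv_lhs => rw [this]
    rw [Lagrange.interpolate_apply, Polynomial.eval_finsetSum]
    simp [mul_comm]

lemma image_ball_eq [MeasurableSpace E] [BorelSpace E] (f : E → E) (hf : ∀ x ∈ closedBall (0 : E) 1, ContDiffAt ℝ 1 f x)
    (hs : ∀ x, ‖x‖ = 1 → f x = x) (hn : ∀ x ∈ closedBall (0 : E) 1, ‖f x‖ ≤ 1) :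
    ∃ δ : ℝ, 0 < δ ∧ ∀ t : ℝ, 0 < t → t < δ →
      ∫ x in ball (0 : E) 1, (1 + t • (fderiv ℝ f x - 1)).det = (volume (ball (0 : E) 1)).toReal := by
  set g : E → E := fun x => f x - x with hg
  set g' : E → E →L[ℝ] E := fun x => fderiv ℝ f x - 1 with hg'
  have hgd : ∀ x ∈ closedBall (0 : E) 1, HasStrictFDerivAt g (g' x) x := fun x hx =>
    ((hf x hx).hasStrictFDerivAt (by norm_num)).sub (hasStrictFDerivAt_id x)
  have hgc : ContinuousOn g' (closedBall 0 1) := by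
    intro x hx
    have : ContinuousAt (fderiv ℝ f) x := ((hf x hx).fderiv_right (m := 0) (by norm_num)).continuousAt
    exact (this.sub continuousAt_const).continuousWithinAt
  obtain ⟨C, hC⟩ := (isCompact_closedBall (0 : E) 1).exists_bound_of_continuousOn hgc
  obtain ⟨C, hC0, hC⟩ : ∃ C : ℝ, 0 < C ∧ ∀ x ∈ closedBall (0 : E) 1, ‖g' x‖ ≤ C :=
    ⟨max C 1, by positivity, fun x hx => (hC x hx).trans (le_max_left _ _)⟩
  have hlip : ∀ x ∈ closedBall (0 : E) 1, ∀ y ∈ closedBall (0 : E) 1, ‖g x - g y‖ ≤ C * ‖x - y‖ := by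
    intro x hx y hy
    exact (convex_closedBall (0 : E) 1).norm_image_sub_le_of_norm_hasFDerivWithin_le
      (fun z hz => (hgd z hz).hasFDerivAt.hasFDerivWithinAt) hC hy hx
  have hdet : ∀ᶠ A : E →L[ℝ] E in 𝓝 0, 0 < (1 + A).det := by
    have h1 : Continuous fun A : E →L[ℝ] E => (1 + A).det :=
      ContinuousLinearMap.continuous_det.comp (continuous_const.add continuous_id)
    refine h1.continuousAt.eventually_const_lt ?_
    simp [ContinuousLinearMap.det]
  obtain ⟨ε, hε, hdet⟩ := Metric.eventually_nhds_iff.1 hdet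
  refine ⟨min (min 1 ε / C) 1, by positivity, fun t ht0 ht => ?_⟩
  have ht1 : t < 1 := ht.trans_le (min_le_right _ _)
  have htC : t * C < min 1 ε := (lt_div_iff₀ hC0).1 (ht.trans_le (min_le_left _ _))
  have htC1 : t * C < 1 := htC.trans_le (min_le_left _ _)
  have htCε : t * C < ε := htC.trans_le (min_le_right _ _)
  set F : E → E := fun x => x + t • g x with hF
  have hFd : ∀ x ∈ closedBall (0 : E) 1, HasStrictFDerivAt F (1 + t • g' x) x := fun x hx =>
    (hasStrictFDerivAt_id x).add ((hgd x hx).const_smul t)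
  have hpos : ∀ x ∈ closedBall (0 : E) 1, 0 < (1 + t • g' x).det := by
    intro x hx
    apply hdet
    rw [dist_zero_right, norm_smul, Real.norm_of_nonneg ht0.le]
    exact (mul_le_mul_of_nonneg_left (hC x hx) ht0.le).trans_lt htCε
  have hinj : InjOn F (closedBall 0 1) := by
    intro x hx y hy hxy
    have h1 : x - y = - (t • (g x - g y)) := by
      simp only [hF] at hxy
      rw [smul_sub]
      have := sub_eq_zero.2 hxy
      rw [← sub_eq_zero, ← this]; abel
    have h2 : ‖x - y‖ ≤ t * C * ‖x - y‖ := by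
      calc ‖x - y‖ = t * ‖g x - g y‖ := by
            conv_lhs => rw [h1]
            rw [norm_neg, norm_smul, Real.norm_of_nonneg ht0.le]
        _ ≤ t * (C * ‖x - y‖) := mul_le_mul_of_nonneg_left (hlip x hx y hy) ht0.le
        _ = _ := by ring
    have h3 : ‖x - y‖ = 0 := by nlinarith [norm_nonneg (x - y)]
    exact sub_eq_zero.1 (norm_eq_zero.1 h3)
  have hFalt : ∀ x, F x = (1 - t) • x + t • f x := by
    intro x; simp only [hF, hg, smul_sub, sub_smul, one_smul]; abel
  have hsub : F '' ball 0 1 ⊆ ball 0 1 := by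
    rintro _ ⟨x, hx, rfl⟩
    rw [mem_ball_zero_iff] at hx ⊢
    rw [hFalt]
    calc ‖(1 - t) • x + t • f x‖ ≤ (1 - t) * ‖x‖ + t * ‖f x‖ := by
          refine (norm_add_le _ _).trans_eq ?_
          rw [norm_smul, norm_smul, Real.norm_of_nonneg ht0.le, Real.norm_of_nonneg (by linarith)]
      _ < 1 := by
          have := hn x (by simpa using hx.le)
          nlinarith
  have hopen : IsOpen (F '' ball 0 1) := by
    rw [isOpen_iff_mem_nhds]
    rintro _ ⟨x, hx, rfl⟩
    have hx' := ball_subset_closedBall hx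
    have hsurj : (1 + t • g' x).range = ⊤ := by
      have := LinearMap.range_eq_top.2 ((LinearMap.equivOfDetNeZero
        ((1 + t • g' x : E →L[ℝ] E) : E →ₗ[ℝ] E) (hpos x hx').ne').surjective)
      exact this
    rw [← (hFd x hx').map_nhds_eq_of_surj hsurj]
    exact Filter.image_mem_map (isOpen_ball.mem_nhds hx)
  have hcont : ContinuousOn F (closedBall 0 1) := fun x hx =>
    (hFd x hx).continuousAt.continuousWithinAt
  have himg : F '' ball 0 1 = ball 0 1 := by
    refine hsub.antisymm ?_
    refine (convex_ball (0 : E) 1).isPreconnected.subset_of_closure_inter_subset hopen ?_ ?_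
    · have h0 : (0 : E) ∈ ball (0 : E) 1 := by simp
      exact ⟨F 0, hsub ⟨0, h0, rfl⟩, ⟨0, h0, rfl⟩⟩
    · rintro y ⟨hy, hyb⟩
      have hcl : closure (F '' ball 0 1) ⊆ F '' closedBall 0 1 :=
        closure_minimal (image_mono ball_subset_closedBall)
          ((isCompact_closedBall _ _).image_of_continuousOn hcont).isClosed
      obtain ⟨x, hx, rfl⟩ := hcl hy
      rw [mem_closedBall_zero_iff] at hx
      rcases hx.lt_or_eq with h | h
      · exact ⟨x, by simpa using h, rfl⟩
      · exfalso
        have : F x = x := by rw [hFalt, hs x h, ← add_smul]; simp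
        rw [this, mem_ball_zero_iff] at hyb
        linarith
  have key := integral_image_eq_integral_abs_det_fderiv_smul volume measurableSet_ball
    (fun x hx => (hFd x (ball_subset_closedBall hx)).hasFDerivAt.hasFDerivWithinAt)
    (hinj.mono ball_subset_closedBall) (fun _ => (1 : ℝ))
  rw [himg] at key
  have h1 : ∫ x in ball (0 : E) 1, |(1 + t • g' x).det| • (1 : ℝ)
      = ∫ x in ball (0 : E) 1, (1 + t • g' x).det := by
    refine setIntegral_congr_fun measurableSet_ball fun x hx => ?_
    simp [abs_of_pos (hpos x (ball_subset_closedBall hx))]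
  rw [← h1, ← key]
  simp [Measure.real]

lemma no_retraction [MeasurableSpace E] [BorelSpace E] (f : E → E) (hf : ∀ x ∈ closedBall (0 : E) 1, ContDiffAt ℝ 1 f x)
    (hs : ∀ x, ‖x‖ = 1 → f x = x) (hn : ∀ x ∈ closedBall (0 : E) 1, ‖f x‖ = 1) : False := by
  obtain ⟨δ, hδ, hv⟩ := image_ball_eq f hf hs (fun x hx => (hn x hx).le)
  obtain ⟨v, w, hvδ, hw⟩ := lagrange_weights (Module.finrank ℝ E) δ hδ
  have hc : ∀ t : ℝ, ContinuousOn (fun x => (1 + t • (fderiv ℝ f x - 1)).det) (closedBall 0 1) := by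
    intro t x hx
    have : ContinuousAt (fderiv ℝ f) x := ((hf x hx).fderiv_right (m := 0) (by norm_num)).continuousAt
    have h2 : ContinuousAt (fun x => 1 + t • (fderiv ℝ f x - 1)) x :=
      continuousAt_const.add ((this.sub continuousAt_const).const_smul t)
    exact (ContinuousLinearMap.continuous_det.continuousAt.comp h2).continuousWithinAt
  have hi : ∀ t : ℝ, IntegrableOn (fun x => (1 + t • (fderiv ℝ f x - 1)).det) (ball 0 1) := fun t =>
    ((hc t).integrableOn_compact (isCompact_closedBall _ _)).mono_set ball_subset_closedBall
  have hpt : ∀ L : E →L[ℝ] E, (1 + (1 : ℝ) • L).det = ∑ i, w i * (1 + v i • L).det := by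
    intro L
    obtain ⟨p, hp, hpe⟩ := det_poly L
    simpa only [hpe] using hw p hp
  have hsum : ∑ i, w i = 1 := by simpa using (hw 1 (by simp)).symm
  have h1 : ∫ x in ball (0 : E) 1, (1 + (1 : ℝ) • (fderiv ℝ f x - 1)).det
      = (volume (ball (0 : E) 1)).toReal := by
    simp_rw [hpt]
    rw [integral_finsetSum _ (fun i _ => (hi (v i)).const_mul (w i))]
    simp_rw [integral_const_mul]
    rw [Finset.sum_congr rfl (fun i _ => by rw [hv (v i) (hvδ i).1 (hvδ i).2]), ← Finset.sum_mul,
      hsum, one_mul]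
  have h2 : ∫ x in ball (0 : E) 1, (1 + (1 : ℝ) • (fderiv ℝ f x - 1)).det = 0 := by
    rw [setIntegral_congr_fun (g := fun _ => (0 : ℝ)) measurableSet_ball]
    · simp
    intro x hx
    have hx' := ball_subset_closedBall hx
    simp only [one_smul, add_sub_cancel]
    by_contra hdet
    have hsurj := (LinearMap.equivOfDetNeZero ((fderiv ℝ f x : E →L[ℝ] E) : E →ₗ[ℝ] E) hdet).surjective
    have hd := ((hf x hx').differentiableAt (by norm_num)).hasFDerivAt
    have hd2 := hd.norm_sq
    have hd3 : HasFDerivAt (fun y => ‖f y‖ ^ 2) (0 : E →L[ℝ] ℝ) x := by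
      refine (hasFDerivAt_const (1 : ℝ) x).congr_of_eventuallyEq ?_
      filter_upwards [isOpen_ball.mem_nhds hx] with y hy
      rw [hn y (ball_subset_closedBall hy)]; simp
    have heq := hd2.unique hd3
    obtain ⟨z, hz⟩ := hsurj (f x)
    have hz' : fderiv ℝ f x z = f x := hz
    have := congrArg (fun A : E →L[ℝ] ℝ => A z) heq
    simp [hz'] at this
    have h5 := hn x hx'
    rw [this] at h5
    simp at h5
  rw [h2] at h1
  have h3 : 0 < (volume (ball (0 : E) 1)).toReal :=
    ENNReal.toReal_pos (measure_ball_pos _ _ one_pos).ne' measure_ball_lt_top.ne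
  linarith

lemma brouwer_smooth (h : E → E) (hh : ContDiff ℝ 1 h)
    (hm : ∀ x ∈ closedBall (0 : E) 1, ‖h x‖ ≤ 1) : ∃ x ∈ closedBall (0 : E) 1, h x = x := by
  borelize E
  by_contra! hne
  let w : E → E := fun x => x - h x
  let a : E → ℝ := fun x => ‖w x‖ ^ 2
  let b : E → ℝ := fun x => inner ℝ x (w x)
  let D : E → ℝ := fun x => b x ^ 2 + a x * (1 - ‖x‖ ^ 2)
  have hw : ContDiff ℝ 1 w := contDiff_id.sub hh
  have ha : ContDiff ℝ 1 a := hw.norm_sq ℝ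
  have hb : ContDiff ℝ 1 b := contDiff_id.inner ℝ hw
  have hD : ContDiff ℝ 1 D := (hb.pow 2).add (ha.mul (contDiff_const.sub (contDiff_id.norm_sq ℝ)))
  have ha0 : ∀ x ∈ closedBall (0 : E) 1, 0 < a x := fun x hx => by
    have : w x ≠ 0 := sub_ne_zero.2 (hne x hx).symm
    positivity
  have hb0 : ∀ x ∈ closedBall (0 : E) 1, ‖x‖ = 1 → 0 < b x := fun x hx h1 => by
    have h2 := ha0 x hx
    have h3 : a x = ‖x‖ ^ 2 - 2 * inner ℝ x (h x) + ‖h x‖ ^ 2 := norm_sub_sq_real x (h x)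
    have h4 : b x = ‖x‖ ^ 2 - inner ℝ x (h x) := by
      simp only [b, w, inner_sub_right, real_inner_self_eq_norm_sq]
    have h5 := hm x hx
    rw [h1] at h3 h4
    nlinarith [norm_nonneg (h x)]
  have hD0 : ∀ x ∈ closedBall (0 : E) 1, 0 < D x := fun x hx => by
    have h1 : ‖x‖ ≤ 1 := by simpa using hx
    rcases h1.lt_or_eq with h2 | h2
    · have : 0 < 1 - ‖x‖ ^ 2 := by nlinarith [norm_nonneg x]
      have := mul_pos (ha0 x hx) this
      have := sq_nonneg (b x)
      simp only [D]; linarith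
    · have := hb0 x hx h2
      simp only [D, h2]; nlinarith
  let l : E → ℝ := fun x => (-b x + √(D x)) / a x
  refine no_retraction (fun x => x + l x • w x) ?_ ?_ ?_
  · intro x hx
    have h1 : ContDiffAt ℝ 1 l x :=
      (hb.contDiffAt.neg.add (hD.contDiffAt.sqrt (hD0 x hx).ne')).div ha.contDiffAt (ha0 x hx).ne'
    exact contDiffAt_id.add (h1.smul hw.contDiffAt)
  · intro x hx
    have hx' : x ∈ closedBall (0 : E) 1 := by simp [hx]
    have : l x = 0 := by
      simp only [l, D, hx]
      rw [one_pow, sub_self, mul_zero, add_zero, Real.sqrt_sq (hb0 x hx' hx).le]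
      simp
    simp [this]
  · intro x hx
    have h1 : ‖x + l x • w x‖ ^ 2 = 1 := by
      rw [norm_add_sq_real, inner_smul_right, norm_smul, mul_pow, Real.norm_eq_abs, sq_abs]
      change ‖x‖ ^ 2 + 2 * (l x * b x) + l x ^ 2 * a x = 1
      have hs := Real.sq_sqrt (hD0 x hx).le
      have hl : l x * a x = -b x + √(D x) := div_mul_cancel₀ _ (ha0 x hx).ne'
      have h3 : a x * (‖x‖ ^ 2 + 2 * (l x * b x) + l x ^ 2 * a x - 1) = 0 := by
        have : a x * (‖x‖ ^ 2 + 2 * (l x * b x) + l x ^ 2 * a x - 1)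
          = (l x * a x) ^ 2 + 2 * b x * (l x * a x) - a x * (1 - ‖x‖ ^ 2) := by ring
        rw [this, hl]
        have : √(D x) ^ 2 = b x ^ 2 + a x * (1 - ‖x‖ ^ 2) := hs
        linear_combination this
      have := (mul_eq_zero.1 h3).resolve_left (ha0 x hx).ne'
      linarith
    exact (pow_eq_one_iff_of_nonneg (norm_nonneg _) two_ne_zero).1 h1

lemma brouwer_bounded (f : E → E) (hf : Continuous f) (R : ℝ) (hR : ∀ x, ‖f x‖ ≤ R) :
    ∃ x, f x = x := by
  have hR0 : 0 ≤ R := (norm_nonneg _).trans (hR 0)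
  have happ : ∀ ε : ℝ, 0 < ε → ε ≤ 1 → ∃ y ∈ closedBall (0 : E) (R + 1), ‖f y - y‖ ≤ ε := by
    intro ε hε hε1
    obtain ⟨g, hg, hgf, -⟩ := hf.exists_contDiff_approx 1 (ε := fun _ => ε) continuous_const
      (fun _ => hε)
    have hR' : 0 < R + 1 := by linarith
    have hgb : ∀ x, ‖g x‖ ≤ R + 1 := fun x => by
      have h1 := hgf x
      rw [dist_eq_norm] at h1
      have h2 := norm_le_norm_add_norm_sub' (g x) (f x)
      linarith [hR x]
    obtain ⟨x, hx, hfx⟩ := brouwer_smooth (fun x => (R + 1)⁻¹ • g ((R + 1) • x))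
      (contDiff_const.smul (hg.comp (contDiff_const.smul contDiff_id))) (fun x _ => by
        rw [norm_smul, norm_inv, Real.norm_of_nonneg hR'.le, inv_mul_le_iff₀ hR', mul_one]
        exact hgb _)
    have hfix : g ((R + 1) • x) = (R + 1) • x := by
      conv_rhs => rw [← hfx]
      rw [smul_smul, mul_inv_cancel₀ hR'.ne', one_smul]
    refine ⟨(R + 1) • x, ?_, ?_⟩
    · rw [mem_closedBall_zero_iff, ← hfix]; exact hgb _
    · have := (hgf ((R + 1) • x)).le
      rwa [hfix, dist_comm, dist_eq_norm] at this
  obtain ⟨y, hy, hmin⟩ := (isCompact_closedBall (0 : E) (R + 1)).exists_isMinOn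
    ⟨0, by simp; linarith⟩ (f := fun y => ‖f y - y‖) (by fun_prop)
  refine ⟨y, ?_⟩
  by_contra hne
  have hpos : 0 < ‖f y - y‖ := norm_pos_iff.2 (sub_ne_zero.2 hne)
  obtain ⟨z, hz, hzε⟩ := happ (min 1 (‖f y - y‖ / 2)) (by positivity) (min_le_left _ _)
  have h1 : ‖f y - y‖ ≤ ‖f z - z‖ := hmin hz
  have h2 := hzε.trans (min_le_right _ _)
  linarith

end Brouwer

lemma cube_fixed {ι : Type*} (a : ι → ℝ) (ha : ∀ i, 0 ≤ a i)
    (G : {x : ι → ℝ // ∀ i, |x i| ≤ a i} → ι → ℝ) (hG : Continuous G)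
    (hb : ∀ x i, |G x i| ≤ a i) : ∃ x : {x : ι → ℝ // ∀ i, |x i| ≤ a i}, G x = x.1 := by
  classical
  let cl : (ι → ℝ) → {x : ι → ℝ // ∀ i, |x i| ≤ a i} := fun x =>
    ⟨fun i => max (-a i) (min (a i) (x i)), fun i => by
      rw [abs_le]
      exact ⟨le_max_left _ _, max_le (by linarith [ha i]) (min_le_left _ _)⟩⟩
  have hcl : Continuous cl := by
    refine Continuous.subtype_mk ?_ _
    fun_prop
  have hfin : ∀ s : Finset ι, ∃ x : {x : ι → ℝ // ∀ i, |x i| ≤ a i}, ∀ i ∈ s, G x i = x.1 i := by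
    intro s
    let ext : EuclideanSpace ℝ s → ι → ℝ := fun y i => if h : i ∈ s then y ⟨i, h⟩ else 0
    have hext : Continuous ext := by
      refine continuous_pi fun i => ?_
      by_cases h : i ∈ s
      · simp only [ext, h, dite_true]; fun_prop
      · simp only [ext, h, dite_false]; fun_prop
    let f : EuclideanSpace ℝ s → EuclideanSpace ℝ s := fun y =>
      WithLp.toLp 2 (fun i : s => G (cl (ext y)) i)
    have hf : Continuous f := by
      refine (PiLp.continuous_toLp 2 _).comp ?_
      refine continuous_pi fun i => ?_
      exact (continuous_apply (i : ι)).comp (hG.comp (hcl.comp hext))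
    obtain ⟨y, hy⟩ := brouwer_bounded f hf (√(∑ i : s, (a i) ^ 2)) (fun y => by
      rw [EuclideanSpace.norm_eq]
      refine Real.sqrt_le_sqrt (Finset.sum_le_sum fun i _ => ?_)
      exact pow_le_pow_left₀ (norm_nonneg _) (hb _ _) 2)
    refine ⟨cl (ext y), fun i hi => ?_⟩
    have h1 : G (cl (ext y)) i = y ⟨i, hi⟩ := congrArg (fun z : EuclideanSpace ℝ s => z ⟨i, hi⟩) hy
    have h2 := abs_le.1 (hb (cl (ext y)) i)
    have h3 : (cl (ext y)).1 i = max (-a i) (min (a i) (ext y i)) := rfl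
    have h4 : ext y i = y ⟨i, hi⟩ := by simp [ext, hi]
    rw [h3, h4, ← h1, min_eq_right h2.2, max_eq_right h2.1]
  choose x hx using hfin
  have hK : CompactSpace {x : ι → ℝ // ∀ i, |x i| ≤ a i} := by
    have : IsCompact {x : ι → ℝ | ∀ i, x i ∈ Set.Icc (-a i) (a i)} :=
      isCompact_pi_infinite fun i => isCompact_Icc
    refine (isCompact_iff_compactSpace (s := {x : ι → ℝ | ∀ i, |x i| ≤ a i})).1 ?_
    simpa only [Set.mem_Icc, abs_le] using this
  let U : Ultrafilter (Finset ι) := Ultrafilter.of Filter.atTop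
  have hU : (U : Filter (Finset ι)) ≤ Filter.atTop := Ultrafilter.of_le _
  obtain ⟨z, -, hz⟩ := isCompact_univ.ultrafilter_le_nhds (U.map x) (by simp)
  have hz' : Filter.Tendsto x U (nhds z) := hz
  refine ⟨z, funext fun i => ?_⟩
  have h1 : Filter.Tendsto (fun s => G (x s) i) U (nhds (G z i)) :=
    (((continuous_apply i).comp hG).tendsto z).comp hz'
  have h2 : Filter.Tendsto (fun s => (x s).1 i) U (nhds (z.1 i)) :=
    (((continuous_apply i).comp continuous_subtype_val).tendsto z).comp hz'
  refine tendsto_nhds_unique (h1.congr' ?_) h2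
  refine hU ?_
  filter_upwards [Filter.eventually_ge_atTop {i}] with s hs
  exact hx s i (hs (Finset.mem_singleton_self i))

section FourierPart
open MeasureTheory

/-- The `k`-th (unnormalised) Fourier integral of a real function on `[0, 2π]`. -/
noncomputable def FC (k : ℤ) (f : ℝ → ℝ) : ℂ :=
  ∫ θ in (0 : ℝ)..(2 * π), (f θ : ℂ) * Complex.exp (-(k * θ * Complex.I))

lemma FC_int (k : ℤ) {f : ℝ → ℝ} (hf : Continuous f) (a b : ℝ) : IntervalIntegrable
    (fun θ : ℝ => (f θ : ℂ) * Complex.exp (-(k * θ * Complex.I))) volume a b := by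
  refine Continuous.intervalIntegrable ?_ _ _
  fun_prop

lemma FC_add (k : ℤ) {f g : ℝ → ℝ} (hf : Continuous f) (hg : Continuous g) :
    FC k (fun θ => f θ + g θ) = FC k f + FC k g := by
  unfold FC
  rw [← intervalIntegral.integral_add (FC_int k hf _ _) (FC_int k hg _ _)]
  congr 1; ext θ; push_cast; ring

lemma FC_smul (k : ℤ) (c : ℝ) (f : ℝ → ℝ) : FC k (fun θ => c * f θ) = c * FC k f := by
  unfold FC
  rw [← intervalIntegral.integral_const_mul]
  congr 1; ext θ; push_cast; ring

lemma FC_sum (k : ℤ) {ι : Type*} (s : Finset ι) (f : ι → ℝ → ℝ) (hf : ∀ i, Continuous (f i)) :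
    FC k (fun θ => ∑ i ∈ s, f i θ) = ∑ i ∈ s, FC k (f i) := by
  unfold FC
  rw [← intervalIntegral.integral_finsetSum (fun i _ => FC_int k (hf i) _ _)]
  congr 1; ext θ; push_cast; rw [Finset.sum_mul]

lemma exp_per (k : ℤ) (θ : ℝ) : Complex.exp (-(k * ((θ + 2 * π : ℝ) : ℂ) * Complex.I))
    = Complex.exp (-(k * θ * Complex.I)) := by
  rw [Complex.exp_eq_exp_iff_exists_int]
  exact ⟨-k, by push_cast; ring⟩

lemma FC_shift (k : ℤ) {f : ℝ → ℝ} (hp : Function.Periodic f (2 * π)) (a : ℝ) :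
    FC k (fun θ => f (θ - a)) = Complex.exp (-(k * a * Complex.I)) * FC k f := by
  unfold FC
  have h1 : ∀ θ : ℝ, ((f (θ - a) : ℝ) : ℂ) * Complex.exp (-(k * θ * Complex.I))
      = Complex.exp (-(k * a * Complex.I)) *
        (fun θ : ℝ => (f θ : ℂ) * Complex.exp (-(k * θ * Complex.I))) (θ - a) := by
    intro θ
    have : Complex.exp (-(k * θ * Complex.I)) = Complex.exp (-(k * a * Complex.I)) *
        Complex.exp (-(k * ((θ - a : ℝ) : ℂ) * Complex.I)) := by
      rw [← Complex.exp_add]; congr 1; push_cast; ring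
    rw [this]; ring
  simp_rw [h1]
  rw [intervalIntegral.integral_const_mul, intervalIntegral.integral_comp_sub_right
    (fun θ : ℝ => (f θ : ℂ) * Complex.exp (-(k * θ * Complex.I))) a]
  congr 1
  have hper : Function.Periodic (fun θ : ℝ => (f θ : ℂ) * Complex.exp (-(k * θ * Complex.I)))
      (2 * π) := by
    intro θ
    simp only [exp_per, hp θ]
  have := hper.intervalIntegral_add_eq (0 - a) 0
  rw [zero_add] at this
  rw [← this]; congr 1; ring

lemma FC_deriv (k : ℤ) {f g : ℝ → ℝ} (hp : Function.Periodic f (2 * π))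
    (hd : ∀ θ, HasDerivAt f (g θ) θ) (hg : Continuous g) :
    FC k g = k * Complex.I * FC k f := by
  have hf : Continuous f := continuous_iff_continuousAt.2 fun θ => (hd θ).continuousAt
  have h1 : ∀ θ : ℝ, HasDerivAt (fun θ : ℝ => (f θ : ℂ) * Complex.exp (-(k * θ * Complex.I)))
      ((g θ : ℂ) * Complex.exp (-(k * θ * Complex.I)) -
        k * Complex.I * ((f θ : ℂ) * Complex.exp (-(k * θ * Complex.I)))) θ := by
    intro θ
    have h2 : HasDerivAt (fun θ : ℝ => (-(k * (θ : ℂ) * Complex.I))) (-(k * 1 * Complex.I)) θ :=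
      ((Complex.ofRealCLM.hasDerivAt (x := θ)).const_mul (k : ℂ) |>.mul_const Complex.I).neg
    refine ((hd θ).ofReal_comp.mul h2.cexp).congr_deriv ?_
    ring
  have h3 := intervalIntegral.integral_eq_sub_of_hasDerivAt (a := 0) (b := 2 * π)
    (fun θ _ => h1 θ) ((FC_int k hg _ _).sub ((FC_int k hf _ _).const_mul _))
  rw [intervalIntegral.integral_sub (FC_int k hg _ _) ((FC_int k hf _ _).const_mul _),
    intervalIntegral.integral_const_mul] at h3
  have h4 := hp 0
  have h5 := exp_per k 0
  rw [zero_add] at h4 h5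
  rw [h4, h5, sub_self] at h3
  exact sub_eq_zero.1 h3

lemma FC_neg_conj (k : ℤ) (f : ℝ → ℝ) : FC (-k) f = (starRingEnd ℂ) (FC k f) := by
  unfold FC
  rw [intervalIntegral.integral_of_le (by positivity), intervalIntegral.integral_of_le
    (by positivity), ← integral_conj]
  congr 1; ext θ
  rw [map_mul, Complex.conj_ofReal, ← Complex.exp_conj]
  simp

lemma FC_inj {f : ℝ → ℝ} (hf : Continuous f) (hp : Function.Periodic f (2 * π))
    (h0 : ∀ k : ℕ, FC k f = 0) : ∀ θ, f θ = 0 := by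
  have h1 : ∀ k : ℤ, FC k f = 0 := by
    intro k
    obtain ⟨n, rfl | rfl⟩ := k.eq_nat_or_neg
    · exact h0 n
    · rw [FC_neg_conj, h0, map_zero]
  have : Fact (0 < 2 * π) := ⟨by positivity⟩
  have hpc : Function.Periodic (fun θ => (f θ : ℂ)) (2 * π) := fun θ => by simp only [hp θ]
  let F : C(AddCircle (2 * π), ℂ) := ⟨hpc.lift, by
    refine continuous_quot_lift _ ?_
    fun_prop⟩
  have hF : ∀ θ : ℝ, F (θ : AddCircle (2 * π)) = f θ := fun θ => hpc.lift_coe θ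
  have hc : fourierCoeff F = 0 := by
    ext n
    rw [fourierCoeff_eq_intervalIntegral F n 0, zero_add]
    have : ∫ x in (0 : ℝ)..(2 * π), fourier (-n) (x : AddCircle (2 * π)) • F x = FC n f := by
      unfold FC
      congr 1; ext θ
      rw [hF, fourier_coe_apply, smul_eq_mul, mul_comm]
      congr 2
      have : (π : ℂ) ≠ 0 := by exact_mod_cast Real.pi_ne_zero
      push_cast
      field_simp
    rw [this, h1]; simp
  intro θ
  have h2 := has_pointwise_sum_fourier_series_of_summable (f := F) (by rw [hc]; exact summable_zero) θ
  rw [hc] at h2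
  simp only [Pi.zero_apply, zero_smul] at h2
  have h3 := h2.unique hasSum_zero
  rw [hF] at h3
  exact_mod_cast h3

lemma int_exp (n : ℤ) : ∫ θ in (0 : ℝ)..(2 * π), Complex.exp (n * θ * Complex.I)
    = if n = 0 then (2 * π : ℂ) else 0 := by
  split_ifs with h
  · subst h; simp
  · have hne : (n : ℂ) * Complex.I ≠ 0 := mul_ne_zero (by exact_mod_cast h) Complex.I_ne_zero
    have := integral_exp_mul_complex (a := 0) (b := 2 * π) hne
    have h2 : ∀ θ : ℝ, (n : ℂ) * θ * Complex.I = n * Complex.I * θ := fun θ => by ring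
    simp_rw [h2]
    rw [this]
    have h3 : Complex.exp (n * Complex.I * ((2 * π : ℝ) : ℂ)) = 1 := by
      rw [Complex.exp_eq_one_iff]; exact ⟨n, by push_cast; ring⟩
    rw [h3]; simp

/-- One Fourier mode `Re (c e^{ijθ})`. -/
noncomputable def tm (c : ℂ) (j : ℕ) (θ : ℝ) : ℝ := c.re * cos (j * θ) - c.im * sin (j * θ)

lemma tm_eq (c : ℂ) (j : ℕ) (θ : ℝ) : ((tm c j θ : ℝ) : ℂ) =
    (c * Complex.exp (j * θ * Complex.I) + (starRingEnd ℂ) c * Complex.exp (-(j * θ * Complex.I))) / 2 := by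
  have h1 : ((tm c j θ : ℝ) : ℂ) = (((c * Complex.exp (j * θ * Complex.I)).re : ℝ) : ℂ) := by
    congr 1
    have : (j : ℂ) * θ * Complex.I = ((j * θ : ℝ) : ℂ) * Complex.I := by push_cast; ring
    rw [this, Complex.mul_re, Complex.exp_ofReal_mul_I_re, Complex.exp_ofReal_mul_I_im]; rfl
  rw [h1, Complex.re_eq_add_conj, map_mul, ← Complex.exp_conj]
  simp

lemma FC_tm (c : ℂ) (j k : ℕ) (hj : 1 ≤ j) : FC k (tm c j) = if j = k then π * c else 0 := by
  unfold FC
  have h1 : ∀ θ : ℝ, ((tm c j θ : ℝ) : ℂ) * Complex.exp (-(((k : ℤ) : ℂ) * θ * Complex.I)) =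
      (c / 2) * Complex.exp (((j - k : ℤ) : ℂ) * θ * Complex.I) +
      ((starRingEnd ℂ) c / 2) * Complex.exp (((-(j + k) : ℤ) : ℂ) * θ * Complex.I) := by
    intro θ
    have e1 : Complex.exp (((j - k : ℤ) : ℂ) * θ * Complex.I) =
      Complex.exp (j * θ * Complex.I) * Complex.exp (-(((k : ℤ) : ℂ) * θ * Complex.I)) := by
      rw [← Complex.exp_add]; congr 1; push_cast; ring
    have e2 : Complex.exp (((-(j + k) : ℤ) : ℂ) * θ * Complex.I) =
      Complex.exp (-(j * θ * Complex.I)) * Complex.exp (-(((k : ℤ) : ℂ) * θ * Complex.I)) := by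
      rw [← Complex.exp_add]; congr 1; push_cast; ring
    rw [tm_eq, e1, e2]; ring
  simp_rw [h1]
  rw [intervalIntegral.integral_add (Continuous.intervalIntegrable (by fun_prop) _ _)
    (Continuous.intervalIntegrable (by fun_prop) _ _), intervalIntegral.integral_const_mul,
    intervalIntegral.integral_const_mul, int_exp, int_exp,
    if_neg (by omega : ¬ (-((j : ℤ) + k) = 0))]
  by_cases h : j = k
  · subst h; simp; ring
  · rw [if_neg (by omega), if_neg h]; simp

lemma tm_bound (c : ℂ) (j : ℕ) (θ : ℝ) : |tm c j θ| ≤ |c.re| + |c.im| := by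
  unfold tm
  refine (abs_sub _ _).trans ?_
  rw [abs_mul, abs_mul]
  have h1 := abs_cos_le_one (j * θ)
  have h2 := abs_sin_le_one (j * θ)
  nlinarith [abs_nonneg c.re, abs_nonneg c.im]

lemma tm_per (c : ℂ) (j : ℕ) : Function.Periodic (tm c j) (2 * π) := by
  intro θ
  unfold tm
  rw [mul_add, cos_add_nat_mul_two_pi, sin_add_nat_mul_two_pi]

lemma tm_cont (c : ℂ) (j : ℕ) : Continuous (tm c j) := by
  unfold tm; fun_prop

lemma FC_tsum (c : ℕ → ℂ) (b : ℕ → ℝ) (hb : Summable b)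
    (hcb : ∀ n, |(c n).re| + |(c n).im| ≤ b n) (k : ℕ) :
    FC k (fun θ => ∑' n, tm (c n) (n + 1) θ) = if k = 0 then 0 else π * c (k - 1) := by
  have hs : ∀ θ, Summable fun n => tm (c n) (n + 1) θ := fun θ =>
    Summable.of_norm_bounded hb fun n => (tm_bound _ _ _).trans (hcb n)
  have h1 : HasSum (fun n => FC k (tm (c n) (n + 1))) (FC k (fun θ => ∑' n, tm (c n) (n + 1) θ)) := by
    unfold FC
    refine intervalIntegral.hasSum_integral_of_dominated_convergence (fun n _ => b n) ?_ ?_ ?_ ?_ ?_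
    · intro n
      have := tm_cont (c n) (n + 1)
      exact Continuous.aestronglyMeasurable (by fun_prop)
    · intro n
      refine Filter.Eventually.of_forall fun θ _ => ?_
      rw [norm_mul, Complex.norm_exp]
      simpa using (tm_bound _ _ _).trans (hcb n)
    · exact Filter.Eventually.of_forall fun θ _ => hb
    · simp
    · refine Filter.Eventually.of_forall fun θ _ => ?_
      refine HasSum.mul_right _ ?_
      exact Complex.hasSum_ofReal.2 (hs θ).hasSum
  refine h1.unique ?_
  simp_rw [FC_tm _ _ _ (Nat.le_add_left 1 _)]
  by_cases hk : k = 0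
  · subst hk; simp
  · rw [if_neg hk]
    obtain ⟨m, rfl⟩ := Nat.exists_eq_succ_of_ne_zero hk
    have := hasSum_ite_eq m ((π : ℂ) * c m)
    simp only [Nat.succ_eq_add_one, Nat.add_right_cancel_iff, Nat.add_sub_cancel]
    convert this using 3 with n
    rename_i h
    rw [h]

/-- Symbol of the averaging operator. -/
noncomputable def pk (N k : ℕ) : ℂ :=
  (1 / (N : ℂ)) * ∑ j ∈ Finset.range N, Complex.exp (-((k : ℤ) * ((j * (2 * π) / N : ℝ) : ℂ) * Complex.I))

lemma pk_im (N k : ℕ) (hN : 1 ≤ N) : (pk N k).im = 0 := by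
  set z : ℂ := Complex.exp (-((k : ℤ) * ((2 * π / N : ℝ) : ℂ) * Complex.I)) with hz
  have hN0 : (N : ℂ) ≠ 0 := by exact_mod_cast (by omega : N ≠ 0)
  have h1 : ∀ j : ℕ, Complex.exp (-((k : ℤ) * ((j * (2 * π) / N : ℝ) : ℂ) * Complex.I)) = z ^ j := by
    intro j
    rw [hz, ← Complex.exp_nat_mul]; congr 1; push_cast; ring
  have h2 : z ^ N = 1 := by
    rw [hz, ← Complex.exp_nat_mul, Complex.exp_eq_one_iff]
    exact ⟨-k, by push_cast; field_simp⟩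
  unfold pk
  simp_rw [h1]
  by_cases h : z = 1
  · simp [h]
  · have h3 : ∑ j ∈ Finset.range N, z ^ j = 0 := by
      have := mul_geom_sum z N
      rw [h2, sub_self] at this
      exact (mul_eq_zero.1 this).resolve_left (sub_ne_zero.2 h)
    simp [h3]

end FourierPart

section MainPart
open MeasureTheory

lemma FC_zero (f : ℝ → ℝ) : FC 0 f = ((∫ θ in (0 : ℝ)..(2 * π), f θ : ℝ) : ℂ) := by
  unfold FC
  rw [← intervalIntegral.integral_ofReal]
  simp

lemma FC_norm_le (k : ℤ) (f : ℝ → ℝ) (hf : ∀ θ, |f θ| ≤ 1) : ‖FC k f‖ ≤ 2 * π := by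
  unfold FC
  have := intervalIntegral.norm_integral_le_of_norm_le_const (a := 0) (b := 2 * π) (C := 1)
    (f := fun θ : ℝ => (f θ : ℂ) * Complex.exp (-(k * θ * Complex.I))) (fun θ _ => by
      rw [norm_mul, Complex.norm_exp]; simpa using hf θ)
  simpa [abs_of_pos Real.pi_pos] using this

/-- Symbol of the linear operator. -/
noncomputable def sym (N : ℕ) (β ω : ℝ) (k : ℕ) : ℂ :=
  -(β * ω ^ 2 * (k : ℂ) ^ 2) + ω * k * (1 + pk N k) * Complex.I

lemma sym_norm (N : ℕ) (hN : 1 ≤ N) (β ω : ℝ) (k : ℕ) :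
    β * ω ^ 2 * k ^ 2 ≤ ‖sym N β ω k‖ := by
  have h1 : (sym N β ω k).re = -(β * ω ^ 2 * k ^ 2) := by
    have : sym N β ω k = ((-(β * ω ^ 2 * k ^ 2) : ℝ) : ℂ) + ((ω * k : ℝ) : ℂ) * (1 + pk N k) * Complex.I := by
      unfold sym; push_cast; ring
    rw [this, Complex.add_re, Complex.ofReal_re, Complex.mul_I_re, Complex.im_ofReal_mul]
    simp [pk_im N k hN]
  have h2 := Complex.abs_re_le_norm (sym N β ω k)
  rw [h1, abs_neg] at h2
  exact (le_abs_self _).trans h2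

lemma exists_fixed (N : ℕ) (hN : 1 ≤ N) (β I : ℝ) (hβ : 0 < β) (hI : 1 < I) :
    ∃ (ω m : ℝ) (u : ℝ → ℝ), 0 < ω ∧ 2 * ω + m = I ∧ Continuous u ∧ Function.Periodic u (2 * π) ∧
      (∫ θ in (0 : ℝ)..(2 * π), sin (θ + u θ)) = 2 * π * m ∧
      ∀ k : ℕ, 1 ≤ k → sym N β ω k * FC k u = - FC k (fun θ => sin (θ + u θ)) := by
  set ω₀ : ℝ := (I - 1) / 2 with hω₀
  have hω₀p : 0 < ω₀ := by rw [hω₀]; linarith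
  set M : ℝ := 2 / (β * ω₀ ^ 2) with hM
  have hMp : 0 < M := by positivity
  let a : Option (ℕ × Bool) → ℝ := fun i => i.elim 1 (fun p => M / ((p.1 : ℝ) + 1) ^ 2)
  have ha : ∀ i, 0 ≤ a i := by
    rintro (_ | p)
    · exact zero_le_one
    · change 0 ≤ M / ((p.1 : ℝ) + 1) ^ 2
      positivity
  let K := {x : Option (ℕ × Bool) → ℝ // ∀ i, |x i| ≤ a i}
  let c : K → ℕ → ℂ := fun x n => ⟨x.1 (some (n, false)), x.1 (some (n, true))⟩
  let w : K → ℝ := fun x => (I - x.1 none) / 2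
  let b : ℕ → ℝ := fun n => 2 * M * (1 / ((n : ℝ) + 1) ^ 2)
  have hb : Summable b := by
    refine Summable.mul_left _ ?_
    have := (summable_nat_add_iff 1).2 (Real.summable_one_div_nat_pow.2 (one_lt_two))
    simpa using this
  have hcb : ∀ x n, |(c x n).re| + |(c x n).im| ≤ b n := by
    intro x n
    have h1 : |x.1 (some (n, false))| ≤ M / ((n : ℝ) + 1) ^ 2 := x.2 _
    have h2 : |x.1 (some (n, true))| ≤ M / ((n : ℝ) + 1) ^ 2 := x.2 _
    have h3 : b n = M / ((n : ℝ) + 1) ^ 2 + M / ((n : ℝ) + 1) ^ 2 := by simp only [b]; ring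
    rw [h3]
    exact add_le_add h1 h2
  let u : K → ℝ → ℝ := fun x θ => ∑' n, tm (c x n) (n + 1) θ
  have hu : Continuous fun p : K × ℝ => u p.1 p.2 := by
    refine continuous_tsum (fun n => ?_) hb (fun n p => (tm_bound _ _ _).trans (hcb p.1 n))
    simp only [tm, c]
    have h1 : ∀ i, Continuous fun p : K × ℝ => p.1.1 i := fun i =>
      (continuous_apply i).comp (continuous_subtype_val.comp continuous_fst)
    have h2 := h1 (some (n, false))
    have h3 := h1 (some (n, true))
    fun_prop
  let s : K → ℝ → ℝ := fun x θ => sin (θ + u x θ)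
  have hs : Continuous fun p : K × ℝ => s p.1 p.2 := by
    simp only [s]; fun_prop
  have hs1 : ∀ x θ, |s x θ| ≤ 1 := fun x θ => abs_sin_le_one _
  have hw : ∀ x, ω₀ ≤ w x := fun x => by
    have : |x.1 none| ≤ 1 := x.2 none
    have := (abs_le.1 this).2
    simp only [w, hω₀]; linarith
  have hsym : ∀ (x : K) (n : ℕ), β * ω₀ ^ 2 * ((n : ℝ) + 1) ^ 2 ≤ ‖sym N β (w x) (n + 1)‖ := fun x n => by
    refine le_trans ?_ (sym_norm N hN β (w x) (n + 1))
    push_cast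
    have := hw x
    gcongr
  have hsym0 : ∀ (x : K) (n : ℕ), sym N β (w x) (n + 1) ≠ 0 := fun x n => by
    rw [← norm_pos_iff]
    exact lt_of_lt_of_le (by positivity) (hsym x n)
  let z : K → ℕ → ℂ := fun x n => -(1 / (π : ℂ)) * FC ((n + 1 : ℕ) : ℤ) (s x) / sym N β (w x) (n + 1)
  have hFC : ∀ k : ℤ, Continuous fun x : K => FC k (s x) := by
    intro k
    unfold FC
    refine intervalIntegral.continuous_parametric_intervalIntegral_of_continuous' ?_ _ _
    change Continuous fun p : K × ℝ => (s p.1 p.2 : ℂ) * Complex.exp (-(k * p.2 * Complex.I))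
    fun_prop
  have hwc : Continuous w := by
    have : Continuous fun x : K => x.1 none := (continuous_apply _).comp continuous_subtype_val
    exact (continuous_const.sub this).div_const 2
  have hz : ∀ n, Continuous fun x => z x n := by
    intro n
    refine Continuous.div (continuous_const.mul (hFC _)) ?_ (fun x => hsym0 x n)
    unfold sym
    fun_prop
  have hzn : ∀ x n, ‖z x n‖ ≤ M / ((n : ℝ) + 1) ^ 2 := by
    intro x n
    simp only [z]
    rw [norm_div, norm_mul, norm_neg, norm_div, norm_one, Complex.norm_real,
      Real.norm_of_nonneg Real.pi_pos.le]
    have h1 := FC_norm_le ((n + 1 : ℕ) : ℤ) (s x) (hs1 x)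
    have h2 : 1 / π * ‖FC ((n + 1 : ℕ) : ℤ) (s x)‖ ≤ 2 := by
      rw [one_div, inv_mul_le_iff₀ Real.pi_pos]; linarith
    have h3 : M / ((n : ℝ) + 1) ^ 2 = 2 / (β * ω₀ ^ 2 * ((n : ℝ) + 1) ^ 2) := by
      rw [hM, div_div]
    rw [h3]
    exact div_le_div₀ (by norm_num) h2 (by positivity) (hsym x n)
  let G : K → Option (ℕ × Bool) → ℝ := fun x i =>
    i.elim ((1 / (2 * π)) * ∫ θ in (0 : ℝ)..(2 * π), s x θ)
      (fun p => if p.2 then (z x p.1).im else (z x p.1).re)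
  have hG : Continuous G := by
    refine continuous_pi fun i => ?_
    rcases i with _ | ⟨n, _ | _⟩
    · refine continuous_const.mul ?_
      exact intervalIntegral.continuous_parametric_intervalIntegral_of_continuous' hs _ _
    · exact Complex.continuous_re.comp (hz n)
    · exact Complex.continuous_im.comp (hz n)
  have hGb : ∀ x i, |G x i| ≤ a i := by
    intro x i
    rcases i with _ | ⟨n, _ | _⟩
    · change |(1 / (2 * π)) * ∫ θ in (0 : ℝ)..(2 * π), s x θ| ≤ 1
      have h1 := FC_norm_le 0 (s x) (hs1 x)
      rw [FC_zero, Complex.norm_real, Real.norm_eq_abs] at h1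
      have h2 : 0 < 2 * π := by positivity
      rw [abs_mul, abs_of_pos (by positivity), one_div, inv_mul_le_iff₀ h2]
      linarith
    · exact (Complex.abs_re_le_norm _).trans (hzn x n)
    · exact (Complex.abs_im_le_norm _).trans (hzn x n)
  obtain ⟨x, hx⟩ := cube_fixed a ha G hG hGb
  have hx0 : (1 / (2 * π)) * ∫ θ in (0 : ℝ)..(2 * π), s x θ = x.1 none := congrFun hx none
  have hxn : ∀ n, z x n = c x n := fun n =>
    Complex.ext (congrFun hx (some (n, false))) (congrFun hx (some (n, true)))
  refine ⟨w x, x.1 none, u x, hω₀p.trans_le (hw x), ?_, ?_, ?_, ?_, ?_⟩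
  · simp only [w]; ring
  · exact hu.comp (continuous_const.prodMk continuous_id)
  · intro θ
    simp only [u]
    congr 1; ext n
    exact tm_per _ _ θ
  · rw [← hx0]
    have : π ≠ 0 := Real.pi_ne_zero
    change ∫ θ in (0 : ℝ)..(2 * π), s x θ = _
    field_simp
  · intro k hk
    obtain ⟨n, rfl⟩ : ∃ n, k = n + 1 := ⟨k - 1, by omega⟩
    have h1 : FC ((n + 1 : ℕ) : ℤ) (u x) = π * c x n := by
      have := FC_tsum (c x) b hb (hcb x) (n + 1)
      rw [if_neg (by omega), Nat.add_sub_cancel] at this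
      exact this
    rw [h1, ← hxn]
    change sym N β (w x) (n + 1) * (π * (-(1 / (π : ℂ)) * FC ((n + 1 : ℕ) : ℤ) (s x) / sym N β (w x) (n + 1))) = - FC ((n + 1 : ℕ) : ℤ) (s x)
    have h2 := hsym0 x n
    have h3 : (π : ℂ) ≠ 0 := by exact_mod_cast Real.pi_ne_zero
    field_simp

lemma primitive_periodic {h : ℝ → ℝ} (hh : Continuous h) (hp : Function.Periodic h (2 * π))
    (h0 : ∫ θ in (0 : ℝ)..(2 * π), h θ = 0) :
    Function.Periodic (fun θ => ∫ τ in (0 : ℝ)..θ, h τ) (2 * π) := by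
  intro θ
  have h1 := hp.intervalIntegral_add_eq θ 0
  rw [zero_add, h0] at h1
  change ∫ τ in (0 : ℝ)..(θ + 2 * π), h τ = ∫ τ in (0 : ℝ)..θ, h τ
  rw [← intervalIntegral.integral_add_adjacent_intervals (hh.intervalIntegrable 0 θ)
    (hh.intervalIntegrable θ (θ + 2 * π)), h1, add_zero]

lemma regularity (N : ℕ) (β ω m : ℝ) (hβ : 0 < β) (hω : 0 < ω) (u : ℝ → ℝ)
    (hu : Continuous u) (hup : Function.Periodic u (2 * π))
    (hm : (∫ θ in (0 : ℝ)..(2 * π), sin (θ + u θ)) = 2 * π * m)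
    (hk : ∀ k : ℕ, 1 ≤ k → sym N β ω k * FC k u = - FC k (fun θ => sin (θ + u θ))) :
    ∃ H H' : ℝ → ℝ, (∀ θ, HasDerivAt u (H θ) θ) ∧ (∀ θ, HasDerivAt H (H' θ) θ) ∧ Continuous H' ∧
      ∀ θ, β * ω ^ 2 * H' θ + ω * H θ +
        ω * ((1 / (N : ℝ)) * ∑ j ∈ Finset.range N, H (θ - j * (2 * π) / N)) + sin (θ + u θ) = m := by
  set B : ℝ := β * ω ^ 2 with hB
  have hBp : 0 < B := by positivity
  set g : ℝ → ℝ := fun θ => m + (-1) * sin (θ + u θ) with hg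
  have hgc : Continuous g := by simp only [hg]; fun_prop
  have hsp : Function.Periodic (fun θ => sin (θ + u θ)) (2 * π) := fun θ => by
    simp only [hup θ]
    rw [show θ + 2 * π + u θ = θ + u θ + 2 * π by ring, sin_add_two_pi]
  have hgp : Function.Periodic g (2 * π) := fun θ => by
    have := hsp θ
    simp only [hg] at this ⊢; rw [this]
  have hsc : Continuous fun θ => sin (θ + u θ) := by fun_prop
  have hg0 : ∫ θ in (0 : ℝ)..(2 * π), g θ = 0 := by
    simp only [hg]
    rw [intervalIntegral.integral_add (by simp) (Continuous.intervalIntegrable (by fun_prop) _ _),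
      intervalIntegral.integral_const_mul, hm]
    simp
  set G : ℝ → ℝ := fun θ => ∫ τ in (0 : ℝ)..θ, g τ with hG
  have hGp : Function.Periodic G (2 * π) := primitive_periodic hgc hgp hg0
  have hGd : ∀ θ, HasDerivAt G (g θ) θ := fun θ =>
    intervalIntegral.integral_hasDerivAt_right (hgc.intervalIntegrable _ _)
      (hgc.stronglyMeasurableAtFilter _ _) hgc.continuousAt
  have hGc : Continuous G := continuous_iff_continuousAt.2 fun θ => (hGd θ).continuousAt
  set P : (ℝ → ℝ) → ℝ → ℝ := fun f θ =>
    (1 / (N : ℝ)) * ∑ j ∈ Finset.range N, f (θ - j * (2 * π) / N) with hP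
  have hPc : ∀ f, Continuous f → Continuous (P f) := fun f hf => by simp only [hP]; fun_prop
  have hPp : Function.Periodic (P u) (2 * π) := fun θ => by
    simp only [hP]
    congr 1
    refine Finset.sum_congr rfl fun j _ => ?_
    rw [show θ + 2 * π - j * (2 * π) / N = θ - j * (2 * π) / N + 2 * π by ring, hup]
  have hPFC : ∀ k : ℕ, FC k (P u) = pk N k * FC k u := by
    intro k
    simp only [hP]
    rw [FC_smul, FC_sum _ _ (fun (j : ℕ) θ => u (θ - j * (2 * π) / N)) (fun j => by fun_prop)]
    unfold pk
    simp_rw [FC_shift (k : ℤ) hup]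
    rw [← Finset.sum_mul]
    push_cast
    ring
  set Q : ℝ → ℝ := fun θ => G θ + (-ω) * (u θ + P u θ) with hQ
  have hPuc := hPc u hu
  have hQc : Continuous Q := by simp only [hQ]; fun_prop
  set q : ℝ := (1 / (2 * π)) * ∫ θ in (0 : ℝ)..(2 * π), Q θ with hq
  set H : ℝ → ℝ := fun θ => B⁻¹ * (Q θ + (-q)) with hH
  have hHc : Continuous H := by simp only [hH]; fun_prop
  have hHp : Function.Periodic H (2 * π) := fun θ => by
    simp only [hH, hQ]; rw [hGp, hup, hPp]
  have hH0 : ∫ θ in (0 : ℝ)..(2 * π), H θ = 0 := by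
    simp only [hH]
    rw [intervalIntegral.integral_const_mul, intervalIntegral.integral_add
      (hQc.intervalIntegrable _ _) (by simp), intervalIntegral.integral_const, hq]
    have := Real.pi_ne_zero
    simp only [smul_eq_mul]
    field_simp
    ring
  set V : ℝ → ℝ := fun θ => ∫ τ in (0 : ℝ)..θ, H τ with hV
  have hVp : Function.Periodic V (2 * π) := primitive_periodic hHc hHp hH0
  have hVd : ∀ θ, HasDerivAt V (H θ) θ := fun θ =>
    intervalIntegral.integral_hasDerivAt_right (hHc.intervalIntegrable _ _)
      (hHc.stronglyMeasurableAtFilter _ _) hHc.continuousAt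
  have hVc : Continuous V := continuous_iff_continuousAt.2 fun θ => (hVd θ).continuousAt
  have hconst : ∀ (k : ℕ) (r : ℝ), 1 ≤ k → FC k (fun _ => r) = 0 := by
    intro k r hk1
    have h1 := FC_deriv (k : ℤ) (f := fun _ => r) (g := fun _ => 0) (fun _ => rfl)
      (fun θ => hasDerivAt_const θ r) continuous_const
    have h2 : FC (k : ℤ) (fun _ => (0 : ℝ)) = 0 := by simp [FC]
    rw [h2] at h1
    have h3 : ((k : ℤ) : ℂ) * Complex.I ≠ 0 :=
      mul_ne_zero (by exact_mod_cast (by omega : k ≠ 0)) Complex.I_ne_zero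
    exact (mul_eq_zero.1 h1.symm).resolve_left h3
  have hFCV : ∀ k : ℕ, 1 ≤ k → FC k V = FC k u := by
    intro k hk1
    have h3 : ((k : ℤ) : ℂ) * Complex.I ≠ 0 :=
      mul_ne_zero (by exact_mod_cast (by omega : k ≠ 0)) Complex.I_ne_zero
    have e1 := FC_deriv (k : ℤ) hVp hVd hHc
    have e2 := FC_deriv (k : ℤ) hGp hGd hgc
    have e3 : FC k g = -FC k (fun θ => sin (θ + u θ)) := by
      simp only [hg]
      rw [FC_add _ continuous_const (by fun_prop), FC_smul, hconst k m hk1]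
      push_cast; ring
    have e4 : FC k H = (B : ℂ)⁻¹ * (FC k G - ω * (FC k u + pk N k * FC k u)) := by
      simp only [hH]
      rw [FC_smul, FC_add _ hQc continuous_const, hconst k (-q) hk1]
      simp only [hQ]
      rw [FC_add _ hGc (by fun_prop), FC_smul, FC_add _ hu hPuc, hPFC]
      push_cast; ring
    have e5 := hk k hk1
    rw [← e3, e2] at e5
    have hBc : (B : ℂ) ≠ 0 := by exact_mod_cast hBp.ne'
    have hBe : (B : ℂ) = β * ω ^ 2 := by rw [hB]; push_cast; ring
    have e6 : (B : ℂ) * FC k H = FC k G - ω * (FC k u + pk N k * FC k u) := by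
      rw [e4, mul_inv_cancel_left₀ hBc]
    have h4 : ((k : ℤ) : ℂ) = (k : ℂ) := by push_cast; rfl
    have h5 : (B : ℂ) * (k * Complex.I) * (k * Complex.I) * (FC k V - FC k u) = 0 := by
      rw [e1] at e6
      rw [h4] at e5 e6
      unfold sym at e5
      rw [← hBe] at e5
      linear_combination (k * Complex.I) * e6 - e5
        - (B : ℂ) * (k : ℂ) ^ 2 * FC k u * Complex.I_sq
    rw [h4] at h3
    exact sub_eq_zero.1 ((mul_eq_zero.1 h5).resolve_left (mul_ne_zero (mul_ne_zero hBc h3) h3))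
  set r : ℝ := (1 / (2 * π)) * ∫ θ in (0 : ℝ)..(2 * π), (u θ + (-1) * V θ) with hr
  have huV : ∀ θ, (u θ + (-1) * V θ) + (-r) = 0 := by
    refine FC_inj (by fun_prop) ?_ ?_
    · intro θ; simp only [hup θ, hVp θ]
    · intro k
      rcases Nat.eq_zero_or_pos k with rfl | hk1
      · have : FC ((0 : ℕ) : ℤ) (fun θ => u θ + -1 * V θ + -r) = 0 := by
          rw [Nat.cast_zero, FC_zero, intervalIntegral.integral_add
            (Continuous.intervalIntegrable (by fun_prop) _ _) (by simp),
            intervalIntegral.integral_const, hr]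
          have := Real.pi_ne_zero
          simp only [smul_eq_mul]
          rw [Complex.ofReal_eq_zero]
          field_simp
          ring
        exact this
      · rw [FC_add _ (by fun_prop) continuous_const, FC_add _ hu (by fun_prop), FC_smul,
          hconst k _ hk1, hFCV k hk1]
        push_cast; ring
  have hud : ∀ θ, HasDerivAt u (H θ) θ := by
    have : u = fun θ => V θ + r := by ext θ; linarith [huV θ]
    intro θ
    rw [this]
    exact (hVd θ).add_const r
  have hPd : ∀ θ, HasDerivAt (P u) (P H θ) θ := by
    intro θ
    simp only [hP]
    refine HasDerivAt.const_mul _ ?_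
    refine HasDerivAt.fun_sum fun j _ => ?_
    exact (hud _).comp_sub_const θ _
  refine ⟨H, fun θ => B⁻¹ * (g θ + (-ω) * (H θ + P H θ)), hud, ?_, ?_, ?_⟩
  · intro θ
    simp only [hH, hQ]
    refine HasDerivAt.const_mul _ (HasDerivAt.add_const _ ?_)
    exact (hGd θ).add (((hud θ).add (hPd θ)).const_mul (-ω))
  · have := hPc H hHc
    fun_prop
  · intro θ
    rw [mul_inv_cancel_left₀ hBp.ne']
    simp only [hg, hP]
    ring

end MainPart

/-- **(Aronson–Golubitsky–Mallet-Paret.)** For `N ≥ 1`, `β > 0` and `I > 1` there exist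
`T > 0` and a running function `ψ` of period `T` satisfying the delay-differential
equation `β ψ''(t) + ψ'(t) + sin (ψ(t)) + (1/N) ∑_{k=0}^{N−1} ψ'(t − kT/N) = I`;
that is, the resistively loaded array admits a discrete rotating wave
(pony-on-a-merry-go-round) solution `φ_j(t) = ψ(t − (j−1)T/N)`. -/
theorem agmp_pom_existence (N : ℕ) (hN : 1 ≤ N) (β I : ℝ) (hβ : 0 < β) (hI : 1 < I) :
    ∃ (T : ℝ) (ψ : ℝ → ℝ), 0 < T ∧ ContDiff ℝ 2 ψ ∧ IsRunning ψ T ∧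
      ∀ t : ℝ,
        β * deriv (deriv ψ) t + deriv ψ t + Real.sin (ψ t) +
          (1 / (N : ℝ)) *
            ∑ k ∈ Finset.range N, deriv ψ (t - (k : ℝ) * T / (N : ℝ)) = I := by
  obtain ⟨ω, m, u, hω, hωm, hu, hup, hm, hk⟩ := exists_fixed N hN β I hβ hI
  obtain ⟨H, H', hH, hH', hHc, heq⟩ := regularity N β ω m hβ hω u hu hup hm hk
  have hl : ∀ t : ℝ, HasDerivAt (fun t : ℝ => ω * t) ω t := fun t => by
    simpa using (hasDerivAt_id t).const_mul ω
  have hd1 : ∀ t, HasDerivAt (fun t => ω * t + u (ω * t)) (ω + H (ω * t) * ω) t := fun t =>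
    (hl t).add ((hH (ω * t)).comp t (hl t))
  have hd2 : ∀ t, HasDerivAt (fun t => ω + H (ω * t) * ω) (H' (ω * t) * ω * ω) t := fun t => by
    exact (((hH' (ω * t)).comp t (hl t)).mul_const ω).const_add ω
  have e1 : deriv (fun t => ω * t + u (ω * t)) = fun t => ω + H (ω * t) * ω :=
    funext fun t => (hd1 t).deriv
  have e2 : deriv (fun t => ω + H (ω * t) * ω) = fun t => H' (ω * t) * ω * ω :=
    funext fun t => (hd2 t).deriv
  refine ⟨2 * π / ω, fun t => ω * t + u (ω * t), by positivity, ?_, ?_, ?_⟩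
  · rw [show (2 : WithTop ℕ∞) = 1 + 1 by norm_num, contDiff_succ_iff_deriv]
    refine ⟨fun t => (hd1 t).differentiableAt, by simp, ?_⟩
    rw [e1, contDiff_one_iff_deriv]
    refine ⟨fun t => (hd2 t).differentiableAt, ?_⟩
    rw [e2]
    fun_prop
  · intro t
    have : ω * (t + 2 * π / ω) = ω * t + 2 * π := by field_simp
    simp only [this, hup (ω * t)]
    ring
  · intro t
    rw [e1, e2]
    have h1 := heq (ω * t)
    have h2 : ∀ k : ℕ, ω * (t - k * (2 * π / ω) / N) = ω * t - k * (2 * π) / N := fun k => by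
      field_simp
    simp only [h2]
    rw [Finset.sum_add_distrib, ← Finset.sum_mul, Finset.sum_const, Finset.card_range, nsmul_eq_mul]
    have hN0 : (N : ℝ) ≠ 0 := by exact_mod_cast (by omega : N ≠ 0)
    have h3 : (1 / (N : ℝ)) * ((N : ℝ) * ω) = ω := by field_simp
    rw [mul_add, h3]
    linear_combination h1 + hωm
end

section
/- (Aronson–Huang, uniqueness of DRWs) Let β > 0 and I > 1. Then there exists N₀ such that for every N > N₀ the discrete rotating wave solution of the resistively loaded array β φ_k'' + φ_k' + sin(φ_k) + (1/N) Σ_{j=1}^N φ_j' = I is unique up to permutation of the junction indices and time shift: any two DRW solutions with waveforms ψ, ψ̃ and periods T, T̃ satisfy T = T̃ and ψ̃(t) = ψ(t − s) for some s ∈ ℝ. -/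
open Real

/-- `ψ` is the waveform of a discrete rotating wave solution of period `T` of the
resistively loaded array `β φ_k'' + φ_k' + sin (φ_k) + (1/N) ∑_j φ_j' = I`:
`ψ` is a running function of period `T` and `φ_j(t) = ψ(t − (j−1)T/N)` solves the
system. -/
def IsDRWRes (N : ℕ) (β I : ℝ) (ψ : ℝ → ℝ) (T : ℝ) : Prop :=
  0 < T ∧ ContDiff ℝ 2 ψ ∧ IsRunning ψ T ∧
  (∀ k : Fin N, ∀ t : ℝ,
    β * deriv (deriv (fun s => ψ (s - ((k : ℕ) : ℝ) * T / (N : ℝ)))) t +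
      deriv (fun s => ψ (s - ((k : ℕ) : ℝ) * T / (N : ℝ))) t +
      Real.sin (ψ (t - ((k : ℕ) : ℝ) * T / (N : ℝ))) +
      (1 / (N : ℝ)) *
        ∑ j : Fin N, deriv (fun s => ψ (s - ((j : ℕ) : ℝ) * T / (N : ℝ))) t = I)



/-- average over the `N` shifts -/
noncomputable def avg (N : ℕ) (T : ℝ) (f : ℝ → ℝ) (t : ℝ) : ℝ :=
  (1 / (N : ℝ)) * ∑ j : Fin N, f (t - ((j : ℕ) : ℝ) * T / (N : ℝ))

lemma avg_hasDerivAt (N : ℕ) (T : ℝ) (f f' : ℝ → ℝ) (h : ∀ t, HasDerivAt f (f' t) t) (t : ℝ) :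
    HasDerivAt (avg N T f) (avg N T f' t) t := by
  unfold avg
  apply HasDerivAt.const_mul
  apply HasDerivAt.fun_sum
  intro i _
  exact (h _).comp_sub_const _ _

lemma avg_shift (N : ℕ) (hN : 0 < N) (T R : ℝ) (F : ℝ → ℝ) (hF : ∀ t, F (t + T) = F t + R)
    (t : ℝ) : avg N T F (t + T / N) = avg N T F t + R / N := by
  have hN' : (N : ℝ) ≠ 0 := by positivity
  unfold avg
  rw [Fin.sum_univ_eq_sum_range (fun j => F (t + T / N - (j : ℝ) * T / N)) N,
    Fin.sum_univ_eq_sum_range (fun j => F (t - (j : ℝ) * T / N)) N]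
  obtain ⟨n, rfl⟩ : ∃ n, N = n + 1 := ⟨N - 1, by omega⟩
  rw [Finset.sum_range_succ', Finset.sum_range_succ]
  have h1 : ∀ k : ℕ, t + T / ((n + 1 : ℕ) : ℝ) - ((k + 1 : ℕ) : ℝ) * T / ((n + 1 : ℕ) : ℝ)
      = t - (k : ℝ) * T / ((n + 1 : ℕ) : ℝ) := by
    intro k
    field_simp
    push_cast
    ring
  simp only [h1]
  have h2 : t + T / ((n + 1 : ℕ) : ℝ) - ((0 : ℕ) : ℝ) * T / ((n + 1 : ℕ) : ℝ)
      = (t - (n : ℝ) * T / ((n + 1 : ℕ) : ℝ)) + T := by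
    field_simp
    push_cast
    ring
  rw [h2, hF]
  ring

lemma avg_periodic (N : ℕ) (T : ℝ) (f : ℝ → ℝ) (hf : ∀ t, f (t + T) = f t) (t : ℝ) :
    avg N T f (t + T) = avg N T f t := by
  unfold avg
  congr 1
  apply Finset.sum_congr rfl
  intro i _
  rw [← hf (t - _)]
  congr 1
  ring

lemma avg_abs_le (N : ℕ) (hN : 0 < N) (T B : ℝ) (f : ℝ → ℝ) (hf : ∀ t, |f t| ≤ B) (t : ℝ) :
    |avg N T f t| ≤ B := by
  have hN' : (0 : ℝ) < N := by positivity
  unfold avg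
  rw [abs_mul, abs_of_pos (by positivity)]
  have : |∑ j : Fin N, f (t - ((j : ℕ) : ℝ) * T / (N : ℝ))| ≤ N * B := by
    refine (Finset.abs_sum_le_sum_abs _ _).trans ?_
    refine (Finset.sum_le_sum (fun i _ => hf _)).trans ?_
    simp
  rw [div_mul_eq_mul_div, div_le_iff₀ hN']
  linarith

/-- mean value estimate -/
lemma lip (f f' : ℝ → ℝ) (C : ℝ) (h : ∀ t, HasDerivAt f (f' t) t) (hC : ∀ t, |f' t| ≤ C)
    (x y : ℝ) : |f x - f y| ≤ C * |x - y| := by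
  have := Convex.norm_image_sub_le_of_norm_hasDerivWithin_le (s := Set.univ) (f := f) (f' := f')
    (C := C) (x := y) (y := x) (fun t _ => (h t).hasDerivWithinAt) (fun t _ => hC t)
    convex_univ trivial trivial
  simpa using this

lemma mvt (f f' : ℝ → ℝ) (h : ∀ t, HasDerivAt f (f' t) t) (x y : ℝ) (hxy : x < y) :
    ∃ z ∈ Set.Ioo x y, f y - f x = f' z * (y - x) := by
  obtain ⟨z, hz, e⟩ := exists_hasDerivAt_eq_slope f f' hxy
    (fun t _ => (h t).continuousAt.continuousWithinAt) (fun t _ => h t)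
  refine ⟨z, hz, ?_⟩
  rw [e]
  have : y - x ≠ 0 := by linarith
  field_simp

lemma avg_close (N : ℕ) (hN : 0 < N) (T R B : ℝ) (hT : 0 < T) (F f f' : ℝ → ℝ)
    (hF : ∀ t, HasDerivAt F (f t) t) (hf : ∀ t, HasDerivAt f (f' t) t)
    (hR : ∀ t, F (t + T) = F t + R) (hB : ∀ t, |f' t| ≤ B) (t : ℝ) :
    |avg N T f t - R / T| ≤ B * (T / N) := by
  have hN' : (0 : ℝ) < N := by positivity
  have hTN : 0 < T / N := by positivity
  have hB0 : 0 ≤ B := (abs_nonneg _).trans (hB 0)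
  obtain ⟨z, hz, e⟩ := mvt _ _ (avg_hasDerivAt N T F f hF) t (t + T / N) (by linarith)
  rw [avg_shift N hN T R F hR] at e
  have e2 : avg N T f z = R / T := by
    field_simp at e ⊢
    linarith
  rw [← e2]
  refine (lip _ _ B (avg_hasDerivAt N T f f' hf) (avg_abs_le N hN T B f' hB) t z).trans ?_
  gcongr
  rw [abs_le]
  constructor <;> linarith [hz.1, hz.2]

lemma exists_min (f : ℝ → ℝ) (T : ℝ) (hT : 0 < T) (hf : Continuous f)
    (hp : ∀ t, f (t + T) = f t) : ∃ x, ∀ t, f x ≤ f t := by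
  obtain ⟨x, -, hx⟩ := isCompact_Icc.exists_isMinOn (Set.nonempty_Icc.2 hT.le) hf.continuousOn
  refine ⟨x, fun t => ?_⟩
  obtain ⟨y, hy, e⟩ := Function.Periodic.exists_mem_Ico₀ (f := f) hp hT t
  rw [e]
  exact hx (Set.Ico_subset_Icc_self hy)

lemma exists_max (f : ℝ → ℝ) (T : ℝ) (hT : 0 < T) (hf : Continuous f)
    (hp : ∀ t, f (t + T) = f t) : ∃ x, ∀ t, f t ≤ f x := by
  obtain ⟨x, hx⟩ := exists_min (fun t => - f t) T hT hf.neg (by simp [hp])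
  exact ⟨x, fun t => by linarith [hx t]⟩

lemma min_deriv (f f' : ℝ → ℝ) (h : ∀ t, HasDerivAt f (f' t) t) (x : ℝ)
    (hx : ∀ t, f x ≤ f t) : f' x = 0 :=
  IsLocalMin.hasDerivAt_eq_zero (Filter.Eventually.of_forall hx) (h x)

lemma max_deriv (f f' : ℝ → ℝ) (h : ∀ t, HasDerivAt f (f' t) t) (x : ℝ)
    (hx : ∀ t, f t ≤ f x) : f' x = 0 :=
  IsLocalMax.hasDerivAt_eq_zero (Filter.Eventually.of_forall hx) (h x)

lemma cont_of (f f' : ℝ → ℝ) (h : ∀ t, HasDerivAt f (f' t) t) : Continuous f :=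
  continuous_iff_continuousAt.2 fun t => (h t).continuousAt

/-- all the data of a solution -/
structure Sol (N : ℕ) (β I M L B c0 T0 : ℝ) (ψ v a j : ℝ → ℝ) (T : ℝ) : Prop where
  Tpos : 0 < T
  TT0 : T ≤ T0
  c0c : c0 ≤ 2 * Real.pi / T
  hψ : ∀ t, HasDerivAt ψ (v t) t
  hv : ∀ t, HasDerivAt v (a t) t
  ha : ∀ t, HasDerivAt a (j t) t
  run : ∀ t, ψ (t + T) = ψ t + 2 * Real.pi
  per : ∀ t, v (t + T) = v t
  eq : ∀ t, β * a t + v t + Real.sin (ψ t) + avg N T v t = I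
  vM : ∀ t, |v t| ≤ M
  aL : ∀ t, |a t| ≤ L
  jB : ∀ t, |j t| ≤ B

lemma sol_of (N : ℕ) (hN : 0 < N) (β I : ℝ) (hβ : 0 < β) (hI : 1 < I) (ψ : ℝ → ℝ) (T : ℝ)
    (h : IsDRWRes N β I ψ T) :
    ∃ v a j, Sol N β I (2 * (I + 1)) (4 * (I + 1) / β)
      ((4 * (I + 1) / β + 2 * (I + 1) + 4 * (I + 1) / β) / β) ((I - 1) / 2)
      (4 * Real.pi / (I - 1)) ψ v a j T := by
  obtain ⟨hT, hC, hrun, heq⟩ := h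
  have hN' : (0 : ℝ) < N := by positivity
  have hψ : ∀ t, HasDerivAt ψ (deriv ψ t) t := fun t =>
    (hC.differentiable (by norm_num) t).hasDerivAt
  have hC1 : ContDiff ℝ 1 (deriv ψ) := by
    have : ContDiff ℝ (1 + 1) ψ := by
      have e : (1 + 1 : WithTop ℕ∞) = 2 := by norm_num
      rw [e]; exact hC
    exact (contDiff_succ_iff_deriv.1 this).2.2
  have hv : ∀ t, HasDerivAt (deriv ψ) (deriv (deriv ψ) t) t := fun t =>
    (hC1.differentiable (by norm_num) t).hasDerivAt
  set v := deriv ψ with hvdef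
  set a := deriv v with hadef
  have hd1 : ∀ c : ℝ, deriv (fun s => ψ (s - c)) = fun s => v (s - c) := by
    intro c; funext s; exact ((hψ _).comp_sub_const s c).deriv
  have hd2 : ∀ c : ℝ, deriv (fun s => v (s - c)) = fun s => a (s - c) := by
    intro c; funext s; exact ((hv _).comp_sub_const s c).deriv
  have hper : ∀ t, v (t + T) = v t := by
    intro t
    have h1 : HasDerivAt (fun s => ψ (s + T)) (v (t + T)) t := (hψ _).comp_add_const t T
    have h2 : HasDerivAt (fun s => ψ (s + T)) (v t) t := by
      have : (fun s => ψ (s + T)) = fun s => ψ s + 2 * Real.pi := funext hrun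
      rw [this]; exact (hψ t).add_const _
    exact h1.unique h2
  have heqk : ∀ k : Fin N, ∀ t : ℝ, β * a (t - ((k : ℕ) : ℝ) * T / N)
      + v (t - ((k : ℕ) : ℝ) * T / N) + Real.sin (ψ (t - ((k : ℕ) : ℝ) * T / N))
      + avg N T v t = I := by
    intro k t
    have := heq k t
    simp only [hd1, hd2] at this
    exact this
  have heq0 : ∀ t, β * a t + v t + Real.sin (ψ t) + avg N T v t = I := by
    intro t
    simpa using heqk ⟨0, hN⟩ t
  have hm := avg_hasDerivAt N T v a hv
  have hmeq : ∀ t, β * avg N T a t + 2 * avg N T v t + avg N T (fun s => Real.sin (ψ s)) t = I := by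
    intro t
    have := Finset.sum_congr rfl (fun k (_ : k ∈ (Finset.univ : Finset (Fin N))) => heqk k t)
    simp only [Finset.sum_add_distrib, ← Finset.mul_sum] at this
    simp only [Finset.sum_const, Finset.card_univ, Fintype.card_fin, nsmul_eq_mul] at this
    have e : N * avg N T a t = ∑ j : Fin N, a (t - ((j : ℕ) : ℝ) * T / (N : ℝ)) := by
      unfold avg; rw [← mul_assoc, mul_one_div_cancel hN'.ne', one_mul]
    have e1 : N * avg N T v t = ∑ j : Fin N, v (t - ((j : ℕ) : ℝ) * T / (N : ℝ)) := by
      unfold avg; rw [← mul_assoc, mul_one_div_cancel hN'.ne', one_mul]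
    have e2 : N * avg N T (fun s => Real.sin (ψ s)) t
      = ∑ j : Fin N, Real.sin (ψ (t - ((j : ℕ) : ℝ) * T / (N : ℝ))) := by
      unfold avg; rw [← mul_assoc, mul_one_div_cancel hN'.ne', one_mul]
    rw [← e, ← e1, ← e2] at this
    apply mul_left_cancel₀ hN'.ne'
    linarith
  have hS : ∀ t, |avg N T (fun s => Real.sin (ψ s)) t| ≤ 1 :=
    avg_abs_le N hN T 1 _ (fun t => Real.abs_sin_le_one _)
  have hmc := cont_of _ _ hm
  have hmp := avg_periodic N T v hper
  have mlo : ∀ t, (I - 1) / 2 ≤ avg N T v t := by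
    obtain ⟨x, hx⟩ := exists_min _ T hT hmc hmp
    intro t
    have h0 := min_deriv _ _ hm x hx
    have h1 := hmeq x
    rw [h0] at h1
    linarith [hx t, (abs_le.1 (hS x)).2]
  have mhi : ∀ t, avg N T v t ≤ (I + 1) / 2 := by
    obtain ⟨x, hx⟩ := exists_max _ T hT hmc hmp
    intro t
    have h0 := max_deriv _ _ hm x hx
    have h1 := hmeq x
    rw [h0] at h1
    linarith [hx t, (abs_le.1 (hS x)).1]
  have hc0 : (I - 1) / 2 ≤ 2 * Real.pi / T := by
    -- mean value for the average of ψ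
    have hTN : 0 < T / N := by positivity
    obtain ⟨z, hz, e⟩ := mvt _ _ (avg_hasDerivAt N T ψ v hψ) 0 (0 + T / N) (by linarith)
    rw [avg_shift N hN T _ ψ hrun] at e
    have e2 : avg N T v z = 2 * Real.pi / T := by
      field_simp at e ⊢
      linarith
    rw [← e2]; exact mlo z
  have hvc := cont_of _ _ hv
  have hvM : ∀ t, |v t| ≤ 2 * (I + 1) := by
    intro t
    obtain ⟨x, hx⟩ := exists_min _ T hT hvc hper
    obtain ⟨y, hy⟩ := exists_max _ T hT hvc hper
    have h1 := heq0 x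
    rw [min_deriv _ _ hv x hx] at h1
    have h2 := heq0 y
    rw [max_deriv _ _ hv y hy] at h2
    rw [abs_le]
    constructor
    · linarith [hx t, Real.sin_le_one (ψ x), mhi x]
    · linarith [hy t, Real.neg_one_le_sin (ψ y), mlo y]
  have haL : ∀ t, |a t| ≤ 4 * (I + 1) / β := by
    intro t
    rw [le_div_iff₀ hβ]
    nth_rewrite 1 [← abs_of_pos hβ]
    rw [← abs_mul]
    have h1 := heq0 t
    have h2 := abs_le.1 (hvM t)
    rw [abs_le]
    constructor
    · linarith [Real.sin_le_one (ψ t), mhi t]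
    · linarith [Real.neg_one_le_sin (ψ t), mlo t]
  have hafun : a = fun t => (I - v t - Real.sin (ψ t) - avg N T v t) / β := by
    funext t
    have := heq0 t
    field_simp
    linarith
  have haj : ∀ t, HasDerivAt a ((0 - a t - Real.cos (ψ t) * v t - avg N T a t) / β) t := by
    intro t
    have h1 : HasDerivAt (fun t => (I - v t - Real.sin (ψ t) - avg N T v t) / β)
        ((0 - a t - Real.cos (ψ t) * v t - avg N T a t) / β) t :=
      ((((hasDerivAt_const t I).sub (hv t)).sub (hψ t).sin).sub (hm t)).div_const β
    rw [← hafun] at h1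
    exact h1
  refine ⟨v, a, _, hT, ?_, hc0, hψ, hv, haj, hrun, hper, heq0, hvM, haL, ?_⟩
  · rw [le_div_iff₀ hT] at hc0
    rw [le_div_iff₀ (by linarith)]
    linarith
  · intro t
    rw [abs_div, abs_of_pos hβ]
    gcongr
    have h1 := abs_le.1 (haL t)
    have h2 := abs_le.1 (avg_abs_le N hN T _ a haL t)
    have h3 : |Real.cos (ψ t) * v t| ≤ 2 * (I + 1) := by
      rw [abs_mul]
      nlinarith [hvM t, Real.abs_cos_le_one (ψ t), abs_nonneg (v t), abs_nonneg (Real.cos (ψ t))]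
    have h3 := abs_le.1 h3
    rw [abs_le]
    constructor <;> linarith

lemma alg1 (x g e ε : ℝ) (h : e ^ 2 ≤ ε ^ 2) : 2 * x * (g - x - e) ≤ x ^ 2 + g ^ 2 + ε ^ 2 := by
  nlinarith [sq_nonneg (x - g), sq_nonneg (x + e), sq_nonneg x]

lemma alg2 (x g s k : ℝ) (h : s ^ 2 + k ^ 2 = 1) : -(2 * g * (k * x)) ≤ x ^ 2 + g ^ 2 := by
  nlinarith [sq_nonneg (g + k * x), mul_nonneg (sq_nonneg s) (sq_nonneg x)]

set_option maxHeartbeats 1000000 in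
lemma vpos (N : ℕ) (hN : 0 < N) (β I M L B c0 T0 ε a0 : ℝ) (hβ : 0 < β) (hL : 0 < L)
    (hM : 0 < M) (hc0 : 0 < c0)
    (ψ v a j : ℝ → ℝ) (T : ℝ) (S : Sol N β I M L B c0 T0 ψ v a j T)
    (hε : L * (T0 / N) ≤ ε) (ha0 : 0 < a0) (h1 : 6 * a0 ^ 2 * Real.exp ((1 + 1 / β) * T0) ≤ c0 ^ 2)
    (h2 : ε ≤ a0) (h3 : 3 * L * (ε * M * T0) < a0 ^ 3) (t : ℝ) : a0 ≤ v t := by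
  have hN' : (0 : ℝ) < N := by positivity
  have hT := S.Tpos
  have hT0 : 0 < T0 := hT.trans_le S.TT0
  have hε0 : 0 ≤ ε := le_trans (by positivity) hε
  set c := 2 * Real.pi / T with hc
  set J := I - c with hJ
  have he : ∀ t, |avg N T v t - c| ≤ ε := by
    intro t
    refine (avg_close N hN T (2 * Real.pi) L hT ψ v a S.hψ S.hv S.run S.aL t).trans ?_
    refine le_trans ?_ hε
    have := S.TT0
    gcongr
  obtain ⟨t0, ht0⟩ := exists_min v T hT (cont_of _ _ S.hv) S.per
  refine le_trans ?_ (ht0 t)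
  by_contra hb
  push Not at hb
  have hab : a t0 = 0 := min_deriv _ _ S.hv t0 ht0
  -- lower bound
  have hlow : -a0 < v t0 := by
    by_contra hlt
    push Not at hlt
    have hneg : v t0 < 0 := by linarith
    obtain ⟨t1, ht1, hmax⟩ := isCompact_Icc.exists_isMaxOn
      (Set.nonempty_Icc.2 (by linarith : t0 - T ≤ t0)) (cont_of _ _ S.hψ).continuousOn
    have hr0 : ψ t0 = ψ (t0 - T) + 2 * Real.pi := by
      have := S.run (t0 - T)
      rwa [sub_add_cancel] at this
    have hpi := Real.pi_pos
    have hm0 : ψ t0 ≤ ψ t1 := hmax (Set.right_mem_Icc.2 (by linarith))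
    have hne : t1 ≠ t0 - T := by
      rintro rfl
      linarith
    have hne2 : t1 ≠ t0 := by
      rintro rfl
      have hev : ∀ᶠ y in nhdsWithin t1 (Set.Iio t1), ψ t1 < ψ y := by
        have h := (S.hψ t1)
        have h' := (hasDerivAt_iff_tendsto_slope.1 h).eventually (gt_mem_nhds hneg)
        have h'' := h'.filter_mono (nhdsWithin_mono t1
          (fun y (hy : y < t1) => (ne_of_lt hy : y ∈ ({t1}ᶜ : Set ℝ))))
        filter_upwards [h'', self_mem_nhdsWithin] with y hy hy2
        have hy2 : y < t1 := hy2
        rw [slope_def_field] at hy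
        rw [div_neg_iff] at hy
        rcases hy with hy | hy
        · linarith [hy.1]
        · linarith [hy.2]
      have hev2 : ∀ᶠ y in nhdsWithin t1 (Set.Iio t1), t1 - T < y :=
        nhdsWithin_le_nhds (lt_mem_nhds (by linarith))
      obtain ⟨y, ⟨hy1, hy2⟩, hy3⟩ := ((hev.and hev2).and self_mem_nhdsWithin).exists
      have hy3 : y < t1 := hy3
      have := hmax (⟨hy2.le, hy3.le⟩ : y ∈ Set.Icc (t1 - T) t1)
      simp only [Set.mem_ofPred_eq] at this
      linarith
    have hlo : t0 - T < t1 := lt_of_le_of_ne ht1.1 hne.symm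
    have hhi : t1 < t0 := lt_of_le_of_ne ht1.2 hne2
    have hv1 : v t1 = 0 := by
      apply IsLocalMax.hasDerivAt_eq_zero _ (S.hψ t1)
      filter_upwards [Icc_mem_nhds hlo hhi] with y hy
      exact hmax hy
    have hr1 := S.run t1
    obtain ⟨t2, ht2, e2⟩ := intermediate_value_Icc (by linarith : t0 ≤ t1 + T)
      (cont_of _ _ S.hψ).continuousOn (⟨hm0, by linarith⟩ : ψ t1 ∈ Set.Icc (ψ t0) (ψ (t1 + T)))
    have hH : ∀ t, HasDerivAt (fun t => β * v t ^ 2 / 2 - Real.cos (ψ t) - J * ψ t)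
        (v t * (-v t - (avg N T v t - c))) t := by
      intro t
      have h := (((((S.hv t).pow 2).const_mul β).div_const 2).sub (S.hψ t).cos).sub
        ((S.hψ t).const_mul J)
      refine h.congr_deriv ?_
      have e := S.eq t
      have : β * a t = I - v t - Real.sin (ψ t) - avg N T v t := by linarith
      norm_num [hJ]
      linear_combination (v t) * this
    have hev : ∀ t, -(v t * (avg N T v t - c)) ≤ ε * M := by
      intro t
      have : |v t * (avg N T v t - c)| ≤ M * ε := by
        rw [abs_mul]
        exact mul_le_mul (S.vM t) (he t) (abs_nonneg _) hM.le
      linarith [(abs_le.1 this).1]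
    have hQd : ∀ t, HasDerivAt
        (fun t => 3 * L * (β * v t ^ 2 / 2 - Real.cos (ψ t) - J * ψ t) - v t ^ 3)
        (3 * L * (v t * (-v t - (avg N T v t - c))) - 3 * v t ^ 2 * a t) t := by
      intro t
      have h := ((hH t).const_mul (3 * L)).sub ((S.hv t).pow 3)
      refine h.congr_deriv ?_
      norm_num
    obtain ⟨z, hz, ez⟩ := mvt _ _ hQd t1 t0 hhi
    have ineq1 : 3 * L * (v z * (-v z - (avg N T v z - c))) - 3 * v z ^ 2 * a z
        ≤ 3 * L * (ε * M) := by
      have h5 := mul_le_mul_of_nonneg_left (hev z) hL.le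
      have h4 := mul_le_mul_of_nonneg_right (abs_le.1 (S.aL z)).1 (sq_nonneg (v z))
      linarith
    have hQ2 : 3 * L * (β * v t2 ^ 2 / 2 - Real.cos (ψ t2) - J * ψ t2)
        - 3 * L * (β * v t0 ^ 2 / 2 - Real.cos (ψ t0) - J * ψ t0) ≤ 3 * L * (ε * M) * (t2 - t0) := by
      rcases ht2.1.eq_or_lt with h | h
      · rw [← h]; simp
      · obtain ⟨y, hy, ey⟩ := mvt _ _ hH t0 t2 h
        rw [← mul_sub, ey, mul_assoc (3 * L)]
        refine mul_le_mul_of_nonneg_left ?_ (by positivity : (0 : ℝ) ≤ 3 * L)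
        refine mul_le_mul_of_nonneg_right ?_ (by linarith : (0 : ℝ) ≤ t2 - t0)
        linarith [hev y, sq_nonneg (v y)]
    have hQ1 := mul_le_mul_of_nonneg_right ineq1 (by linarith : 0 ≤ t0 - t1)
    rw [← ez] at hQ1
    rw [e2] at hQ2
    rw [hv1] at hQ1
    have hb3 : (-v t0) ^ 3 ≤ 3 * L * (ε * M * T0) := by
      have t21 : t2 - t1 ≤ T0 := by linarith [ht2.2, S.TT0]
      have q1 : 3 * L * (ε * M) * (t2 - t1) ≤ 3 * L * (ε * M) * T0 :=
        mul_le_mul_of_nonneg_left t21 (by positivity)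
      have q2 : 0 ≤ 3 * L * (β * v t2 ^ 2 / 2) := by positivity
      linarith
    have : a0 ^ 3 ≤ (-v t0) ^ 3 := by
      apply pow_le_pow_left₀ ha0.le; linarith
    linarith
  -- Gronwall
  set K := 1 + 1 / β with hK
  have hKpos : 0 < K := by positivity
  have hY : ∀ t, HasDerivAt (fun t => Real.exp (-K * t) * (v t ^ 2 + (J - Real.sin (ψ t)) ^ 2 + ε ^ 2))
      (Real.exp (-K * t) * (-K * (v t ^ 2 + (J - Real.sin (ψ t)) ^ 2 + ε ^ 2)
        + (2 * v t * a t - 2 * (J - Real.sin (ψ t)) * (Real.cos (ψ t) * v t)))) t := by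
    intro t
    have h := (((hasDerivAt_id t).const_mul (-K)).exp).mul
      ((((S.hv t).pow 2).add (((hasDerivAt_const t J).sub (S.hψ t).sin).pow 2)).add_const (ε ^ 2))
    refine h.congr_deriv ?_
    norm_num
    ring
  have hYn : ∀ t, (Real.exp (-K * t) * (-K * (v t ^ 2 + (J - Real.sin (ψ t)) ^ 2 + ε ^ 2)
        + (2 * v t * a t - 2 * (J - Real.sin (ψ t)) * (Real.cos (ψ t) * v t)))) ≤ 0 := by
    intro t
    apply mul_nonpos_of_nonneg_of_nonpos (Real.exp_pos _).le
    set g := J - Real.sin (ψ t) with hg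
    set e := avg N T v t - c with hedef
    have eqa : a t = (g - v t - e) * (1 / β) := by
      have := S.eq t
      field_simp
      rw [hg, hedef, hJ]; linarith
    have i1 : 2 * v t * (g - v t - e) ≤ v t ^ 2 + g ^ 2 + ε ^ 2 := by
      have : e ^ 2 ≤ ε ^ 2 := sq_le_sq' (by linarith [(abs_le.1 (he t)).1]) (abs_le.1 (he t)).2
      exact alg1 _ _ _ _ this
    have i2 : 2 * v t * a t ≤ (v t ^ 2 + g ^ 2 + ε ^ 2) * (1 / β) := by
      rw [eqa, ← mul_assoc]
      exact mul_le_mul_of_nonneg_right i1 (by positivity)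
    have i3 : - (2 * g * (Real.cos (ψ t) * v t)) ≤ v t ^ 2 + g ^ 2 := by
      have := Real.sin_sq_add_cos_sq (ψ t)
      exact alg2 _ _ _ _ this
    have i4 : K * (v t ^ 2 + g ^ 2 + ε ^ 2) = (v t ^ 2 + g ^ 2 + ε ^ 2) + (v t ^ 2 + g ^ 2 + ε ^ 2) * (1 / β) := by
      rw [hK]; ring
    linarith [sq_nonneg ε]
  obtain ⟨t3, ht3, e3⟩ := mvt ψ v S.hψ t0 (t0 + T) (by linarith)
  have hv3 : v t3 = c := by
    rw [S.run] at e3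
    rw [hc]
    field_simp
    linarith
  obtain ⟨z, hz, ez⟩ := mvt _ _ hY t0 t3 ht3.1
  have hdec : Real.exp (-K * t3) * (v t3 ^ 2 + (J - Real.sin (ψ t3)) ^ 2 + ε ^ 2)
      ≤ Real.exp (-K * t0) * (v t0 ^ 2 + (J - Real.sin (ψ t0)) ^ 2 + ε ^ 2) := by
    have := mul_nonpos_of_nonpos_of_nonneg (hYn z) (by linarith [ht3.1] : 0 ≤ t3 - t0)
    linarith
  have hE0 : v t0 ^ 2 + (J - Real.sin (ψ t0)) ^ 2 + ε ^ 2 < 6 * a0 ^ 2 := by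
    have e := S.eq t0
    rw [hab] at e
    have hg : J - Real.sin (ψ t0) = v t0 + (avg N T v t0 - c) := by rw [hJ]; linarith
    rw [hg]
    have b1 : v t0 ^ 2 < a0 ^ 2 := sq_lt_sq' hlow hb
    have b2 : (avg N T v t0 - c) ^ 2 ≤ ε ^ 2 :=
      sq_le_sq' (by linarith [(abs_le.1 (he t0)).1]) (abs_le.1 (he t0)).2
    have b3 : ε ^ 2 ≤ a0 ^ 2 := pow_le_pow_left₀ hε0 h2 2
    nlinarith [sq_nonneg (v t0 - (avg N T v t0 - c))]
  have hfin : c ^ 2 < c0 ^ 2 := by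
    have p1 : Real.exp (K * t3) * Real.exp (-K * t3) = 1 := by
      rw [← Real.exp_add]; simp
    have p2 : Real.exp (K * t3) * Real.exp (-K * t0) ≤ Real.exp (K * T0) := by
      rw [← Real.exp_add]
      apply Real.exp_le_exp.2
      nlinarith [ht3.2, S.TT0]
    have p3 := mul_le_mul_of_nonneg_left hdec (Real.exp_pos (K * t3)).le
    rw [← mul_assoc, ← mul_assoc, p1, hv3] at p3
    have p4 : 0 ≤ v t0 ^ 2 + (J - Real.sin (ψ t0)) ^ 2 + ε ^ 2 := by positivity
    have p5 := mul_le_mul_of_nonneg_right p2 p4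
    have p6 := mul_lt_mul_of_pos_left hE0 (Real.exp_pos (K * T0))
    linarith [sq_nonneg (J - Real.sin (ψ t3)), sq_nonneg ε]
  have := pow_le_pow_left₀ hc0.le S.c0c 2
  linarith

lemma avg_lip (N : ℕ) (hN : 0 < N) (T B : ℝ) (f f' : ℝ → ℝ) (h : ∀ t, HasDerivAt f (f' t) t)
    (hB : ∀ t, |f' t| ≤ B) (x y : ℝ) : |avg N T f x - avg N T f y| ≤ B * |x - y| :=
  lip _ _ B (avg_hasDerivAt N T f f' h) (avg_abs_le N hN T B f' hB) x y

/-- the reparametrisation `τ` with `ψ₂ ∘ τ = ψ₁` -/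
lemma exists_tau (a0 T₁ T₂ : ℝ) (ha0 : 0 < a0) (ψ₁ v₁ ψ₂ v₂ : ℝ → ℝ)
    (h₁ : ∀ t, HasDerivAt ψ₁ (v₁ t) t) (h₂ : ∀ t, HasDerivAt ψ₂ (v₂ t) t)
    (p₂ : ∀ t, a0 ≤ v₂ t) 
    (r₁ : ∀ t, ψ₁ (t + T₁) = ψ₁ t + 2 * Real.pi) (r₂ : ∀ t, ψ₂ (t + T₂) = ψ₂ t + 2 * Real.pi) :
    ∃ τ : ℝ → ℝ, (∀ t, ψ₂ (τ t) = ψ₁ t) ∧ (∀ t, HasDerivAt τ (v₁ t / v₂ (τ t)) t) ∧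
      ∀ t, τ (t + T₁) = τ t + T₂ := by
  have hc := cont_of _ _ h₂
  have hmono : StrictMono ψ₂ := by
    apply strictMono_of_deriv_pos
    intro x
    rw [(h₂ x).deriv]
    linarith [p₂ x]
  have hgrow : ∀ x y, x < y → a0 * (y - x) ≤ ψ₂ y - ψ₂ x := by
    intro x y hxy
    obtain ⟨z, hz, e⟩ := mvt _ _ h₂ x y hxy
    rw [e]
    exact mul_le_mul_of_nonneg_right (p₂ z) (by linarith)
  have hsurj : Function.Surjective ψ₂ := by
    intro y
    set R := |y - ψ₂ 0| / a0 + 1 with hR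
    have hRpos : 0 < R := by positivity
    have haR : |y - ψ₂ 0| ≤ a0 * R := by
      rw [hR, mul_add, mul_div_cancel₀ _ ha0.ne']; linarith
    have i1 := hgrow 0 R hRpos
    have i2 := hgrow (-R) 0 (by linarith)
    have hy := abs_le.1 haR
    obtain ⟨x, -, hx⟩ := intermediate_value_Icc (by linarith : -R ≤ R) hc.continuousOn
      (⟨by linarith, by linarith⟩ : y ∈ Set.Icc (ψ₂ (-R)) (ψ₂ R))
    exact ⟨x, hx⟩
  let E := hmono.orderIsoOfSurjective ψ₂ hsurj
  have hE : ∀ y, ψ₂ (E.symm y) = y := fun y => E.apply_symm_apply y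
  have hEc : Continuous E.symm := E.symm.continuous
  have hEd : ∀ y, HasDerivAt E.symm (v₂ (E.symm y))⁻¹ y := by
    intro y
    exact HasDerivAt.of_local_left_inverse hEc.continuousAt (h₂ _)
      (by linarith [p₂ (E.symm y)] : v₂ (E.symm y) ≠ 0) (Filter.Eventually.of_forall hE)
  refine ⟨fun t => E.symm (ψ₁ t), fun t => hE _, ?_, ?_⟩
  · intro t
    have := (hEd (ψ₁ t)).comp t (h₁ t)
    refine this.congr_deriv ?_
    rw [div_eq_inv_mul]
  · intro t
    apply hmono.injective
    rw [r₂, hE, hE, r₁]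

set_option maxHeartbeats 1000000 in
lemma drw_compare (N : ℕ) (hN : 0 < N) (β I M L B c0 T0 a0 : ℝ) (hβ : 0 < β) (hL : 0 < L)
    (hM : 0 < M) (hc0 : 0 < c0) (hB : 0 < B) (ha0 : 0 < a0) (K1 K2 K3 K4 : ℝ)
    (hK1 : K1 = M / a0 / a0 + 1 / c0) (hK2 : K2 = K1 * T0)
    (hK3 : K3 = ((M / a0 + L * K2) + M * K2 + (1 + L * K2)) / β)
    (hK4 : K4 = K3 + L * (1 / c0))
    (hNbig : 3 * (K4 * T0 + B * T0 * K2) ≤ N)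
    (ψ₁ v₁ a₁ j₁ ψ₂ v₂ a₂ j₂ : ℝ → ℝ) (T₁ T₂ : ℝ)
    (S₁ : Sol N β I M L B c0 T0 ψ₁ v₁ a₁ j₁ T₁) (S₂ : Sol N β I M L B c0 T0 ψ₂ v₂ a₂ j₂ T₂)
    (p₁ : ∀ t, a0 ≤ v₁ t) (p₂ : ∀ t, a0 ≤ v₂ t) :
    ¬ (T₂ < T₁) ∧ (T₁ = T₂ → ∃ s, ∀ t, ψ₁ t = ψ₂ (t - s)) := by
  have hN' : (0 : ℝ) < N := by positivity
  have hT₁ := S₁.Tpos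
  have hT₂ := S₂.Tpos
  have hT0 : 0 < T0 := hT₁.trans_le S₁.TT0
  have hK1p : 0 < K1 := by rw [hK1]; positivity
  have hK2p : 0 < K2 := by rw [hK2]; positivity
  have hK3p : 0 < K3 := by rw [hK3]; positivity
  have hK4p : 0 < K4 := by rw [hK4]; positivity
  have hpi := Real.pi_pos
  obtain ⟨τ, hτ, hτd, hτp⟩ := exists_tau a0 T₁ T₂ ha0 ψ₁ v₁ ψ₂ v₂ S₁.hψ S₂.hψ p₂ S₁.run S₂.run
  set c₁ := 2 * Real.pi / T₁ with hc₁
  set c₂ := 2 * Real.pi / T₂ with hc₂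
  have hc₁p : 0 < c₁ := by positivity
  have hc₂p : 0 < c₂ := by positivity
  have hv1p : ∀ t, 0 < v₁ t := fun t => ha0.trans_le (p₁ t)
  have hv2p : ∀ t, 0 < v₂ t := fun t => ha0.trans_le (p₂ t)
  have hτc := cont_of _ _ hτd
  have hm1c := cont_of _ _ (avg_hasDerivAt N T₁ v₁ a₁ S₁.hv)
  have hm2c := cont_of _ _ (avg_hasDerivAt N T₂ v₂ a₂ S₂.hv)
  -- the defect q
  obtain ⟨tη, htη⟩ := exists_max
    (fun t => |(avg N T₁ v₁ t - c₁) - (avg N T₂ v₂ (τ t) - c₂)|) T₁ hT₁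
    (by fun_prop) (by
      intro t
      simp only [hτp, avg_periodic N T₁ v₁ S₁.per, avg_periodic N T₂ v₂ S₂.per])
  set η := |(avg N T₁ v₁ tη - c₁) - (avg N T₂ v₂ (τ tη) - c₂)| with hη
  have hη0 : 0 ≤ η := abs_nonneg _
  set μ := |c₁ - c₂| + η with hμ
  have hμ0 : 0 ≤ μ := by positivity
  have hmm : ∀ t, |avg N T₁ v₁ t - avg N T₂ v₂ (τ t)| ≤ μ := by
    intro t
    have h1 := htη t
    have h2 : avg N T₁ v₁ t - avg N T₂ v₂ (τ t) = (c₁ - c₂) +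
      ((avg N T₁ v₁ t - c₁) - (avg N T₂ v₂ (τ t) - c₂)) := by ring
    rw [h2]
    refine (abs_add_le _ _).trans ?_
    rw [hμ]
    gcongr
  -- energy comparison
  have hPd : ∀ t, HasDerivAt (fun t => v₁ t ^ 2 - v₂ (τ t) ^ 2)
      ((2 * v₁ t / β) * (-(v₁ t - v₂ (τ t)) - (avg N T₁ v₁ t - avg N T₂ v₂ (τ t)))) t := by
    intro t
    have h := ((S₁.hv t).pow 2).sub (((S₂.hv (τ t)).comp t (hτd t)).pow 2)
    refine h.congr_deriv ?_
    have e1 := S₁.eq t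
    have e2 := S₂.eq (τ t)
    rw [hτ] at e2
    have hne := (hv2p (τ t)).ne'
    norm_num
    field_simp
    linear_combination (v₁ t) * (e1 - e2)
  have hPc := cont_of _ _ hPd
  have hPp : ∀ t, v₁ (t + T₁) ^ 2 - v₂ (τ (t + T₁)) ^ 2 = v₁ t ^ 2 - v₂ (τ t) ^ 2 := by
    intro t
    rw [hτp, S₁.per, S₂.per]
  have hcrit : ∀ x, (2 * v₁ x / β) *
      (-(v₁ x - v₂ (τ x)) - (avg N T₁ v₁ x - avg N T₂ v₂ (τ x))) = 0 →
      v₁ x - v₂ (τ x) = -(avg N T₁ v₁ x - avg N T₂ v₂ (τ x)) := by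
    intro x hx
    have : 2 * v₁ x / β ≠ 0 := by have := hv1p x; positivity
    have := (mul_eq_zero.1 hx).resolve_left this
    linarith
  obtain ⟨xm, hxm⟩ := exists_min _ T₁ hT₁ hPc hPp
  obtain ⟨xM, hxM⟩ := exists_max _ T₁ hT₁ hPc hPp
  have em := hcrit xm (min_deriv _ _ hPd xm hxm)
  have eM := hcrit xM (max_deriv _ _ hPd xM hxM)
  have hcb : ∀ x, v₁ x - v₂ (τ x) = -(avg N T₁ v₁ x - avg N T₂ v₂ (τ x)) →
      |v₁ x ^ 2 - v₂ (τ x) ^ 2| ≤ 2 * M * μ := by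
    intro x hx
    have : v₁ x ^ 2 - v₂ (τ x) ^ 2 = (v₁ x + v₂ (τ x)) * (v₁ x - v₂ (τ x)) := by ring
    rw [this, hx, abs_mul, abs_neg]
    refine mul_le_mul ?_ (hmm x) (abs_nonneg _) (by positivity)
    refine (abs_add_le _ _).trans ?_
    linarith [S₁.vM x, S₂.vM (τ x)]
  have hP : ∀ t, |v₁ t ^ 2 - v₂ (τ t) ^ 2| ≤ 2 * M * μ := by
    intro t
    have h1 := (abs_le.1 (hcb xm em)).1
    have h2 := (abs_le.1 (hcb xM eM)).2
    exact abs_le.2 ⟨h1.trans (hxm t), (hxM t).trans h2⟩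
  have hD : ∀ t, |v₁ t - v₂ (τ t)| ≤ M / a0 * μ := by
    intro t
    have h1 := hP t
    have : v₁ t ^ 2 - v₂ (τ t) ^ 2 = (v₁ t + v₂ (τ t)) * (v₁ t - v₂ (τ t)) := by ring
    rw [this, abs_mul, abs_of_pos (by linarith [hv1p t, hv2p (τ t)])] at h1
    have h2 : 2 * a0 * |v₁ t - v₂ (τ t)| ≤ (v₁ t + v₂ (τ t)) * |v₁ t - v₂ (τ t)| :=
      mul_le_mul_of_nonneg_right (by linarith [p₁ t, p₂ (τ t)]) (abs_nonneg _)
    rw [div_mul_eq_mul_div, le_div_iff₀ ha0]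
    linarith
  -- phase drift
  obtain ⟨r, hr⟩ : ∃ r, r = T₂ / T₁ := ⟨_, rfl⟩
  have hr0 : 0 < r := by rw [hr]; positivity
  have hrT : r * T₁ = T₂ := by rw [hr]; field_simp
  have h1r : |1 - r| ≤ 1 / c0 * μ := by
    have : 1 - r = (c₂ - c₁) / c₂ := by
      rw [hr, hc₁, hc₂]; field_simp
    rw [this, abs_div, abs_of_pos hc₂p, abs_sub_comm, div_le_iff₀ hc₂p]
    have h1 : |c₁ - c₂| ≤ μ := by rw [hμ]; linarith
    have h2 : 1 ≤ 1 / c0 * c₂ := by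
      rw [div_mul_eq_mul_div, one_mul, le_div_iff₀ hc0, one_mul]; exact S₂.c0c
    calc |c₁ - c₂| ≤ μ * 1 := by linarith
      _ ≤ μ * (1 / c0 * c₂) := by gcongr
      _ = _ := by ring
  have hδd : ∀ t, HasDerivAt (fun t => τ t - (r * t + τ 0)) (v₁ t / v₂ (τ t) - r) t := by
    intro t
    have h := (hτd t).sub (((hasDerivAt_id t).const_mul r).add_const (τ 0))
    refine h.congr_deriv ?_
    norm_num
  have hδd' : ∀ t, |v₁ t / v₂ (τ t) - r| ≤ K1 * μ := by
    intro t
    have : v₁ t / v₂ (τ t) - r = (v₁ t - v₂ (τ t)) / v₂ (τ t) + (1 - r) := by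
      have := (hv2p (τ t)).ne'
      field_simp
      ring
    rw [this]
    refine (abs_add_le _ _).trans ?_
    rw [hK1, add_mul]
    refine add_le_add ?_ h1r
    rw [abs_div, abs_of_pos (hv2p _), div_le_iff₀ (hv2p _)]
    calc |v₁ t - v₂ (τ t)| ≤ M / a0 * μ := hD t
      _ = M / a0 / a0 * μ * a0 := by field_simp
      _ ≤ M / a0 / a0 * μ * v₂ (τ t) := by
        have := p₂ (τ t)
        gcongr
  have hδ : ∀ t, |τ t - (r * t + τ 0)| ≤ K2 * μ := by
    intro t
    obtain ⟨y, hy, e⟩ := Function.Periodic.exists_mem_Ico₀ (f := fun t => τ t - (r * t + τ 0))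
      (c := T₁) (fun t => by
        show τ (t + T₁) - (r * (t + T₁) + τ 0) = _
        rw [hτp, mul_add, hrT]; ring) hT₁ t
    have e' : τ t - (r * t + τ 0) = τ y - (r * y + τ 0) := e
    rw [e']
    have := lip _ _ _ hδd hδd' y 0
    simp only [mul_zero, zero_add, sub_self, sub_zero] at this
    refine this.trans ?_
    rw [abs_of_nonneg hy.1, hK2]
    have : y ≤ T0 := hy.2.le.trans S₁.TT0
    calc K1 * μ * y ≤ K1 * μ * T0 := by gcongr
      _ = _ := by ring
  -- comparison with the linear reparametrisation
  have hvρ : ∀ t, |v₁ t - v₂ (r * t + τ 0)| ≤ (M / a0 + L * K2) * μ := by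
    intro t
    refine (abs_sub_le _ (v₂ (τ t)) _).trans ?_
    have h1 := lip _ _ _ S₂.hv S₂.aL (τ t) (r * t + τ 0)
    have h2 := mul_le_mul_of_nonneg_left (hδ t) hL.le
    linarith [hD t]
  have hsρ : ∀ t, |Real.sin (ψ₁ t) - Real.sin (ψ₂ (r * t + τ 0))| ≤ M * K2 * μ := by
    intro t
    rw [← hτ t]
    have h0 := lip _ _ 1 Real.hasDerivAt_sin Real.abs_cos_le_one (ψ₂ (τ t)) (ψ₂ (r * t + τ 0))
    have h1 := lip _ _ _ S₂.hψ S₂.vM (τ t) (r * t + τ 0)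
    have h2 := mul_le_mul_of_nonneg_left (hδ t) hM.le
    linarith
  have hmρ : ∀ t, |avg N T₁ v₁ t - avg N T₂ v₂ (r * t + τ 0)| ≤ (1 + L * K2) * μ := by
    intro t
    refine (abs_sub_le _ (avg N T₂ v₂ (τ t)) _).trans ?_
    have h1 := avg_lip N hN T₂ L v₂ a₂ S₂.hv S₂.aL (τ t) (r * t + τ 0)
    have h2 := mul_le_mul_of_nonneg_left (hδ t) hL.le
    linarith [hmm t]
  have haρ : ∀ t, |a₁ t - a₂ (r * t + τ 0)| ≤ K3 * μ := by
    intro t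
    rw [hK3, div_mul_eq_mul_div, le_div_iff₀ hβ]
    nth_rewrite 1 [← abs_of_pos hβ]
    rw [← abs_mul]
    have e1 := S₁.eq t
    have e2 := S₂.eq (r * t + τ 0)
    have h1 := abs_le.1 (hvρ t)
    have h2 := abs_le.1 (hsρ t)
    have h3 := abs_le.1 (hmρ t)
    rw [abs_le]
    constructor <;> linarith [h1.1, h1.2, h2.1, h2.2, h3.1, h3.2]
  have harρ : ∀ t, |a₁ t - a₂ (r * t + τ 0) * r| ≤ K4 * μ := by
    intro t
    have : a₁ t - a₂ (r * t + τ 0) * r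
      = (a₁ t - a₂ (r * t + τ 0)) + a₂ (r * t + τ 0) * (1 - r) := by ring
    rw [this]
    refine (abs_add_le _ _).trans ?_
    rw [hK4, add_mul, abs_mul]
    refine add_le_add (haρ t) ?_
    rw [mul_assoc]
    exact mul_le_mul (S₂.aL _) h1r (abs_nonneg _) hL.le
  have hρ : ∀ t, HasDerivAt (fun t => r * t + τ 0) r t := by
    intro t
    have h := ((hasDerivAt_id t).const_mul r).add_const (τ 0)
    refine h.congr_deriv ?_
    norm_num
  have hh : ∀ t, HasDerivAt (fun t => v₁ t - v₂ (r * t + τ 0)) (a₁ t - a₂ (r * t + τ 0) * r) t :=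
    fun t => (S₁.hv t).sub ((S₂.hv (r * t + τ 0)).comp t (hρ t))
  have hF : ∀ t, HasDerivAt (fun t => ψ₁ t - ψ₂ (r * t + τ 0) / r) (v₁ t - v₂ (r * t + τ 0)) t := by
    intro t
    have h := (S₁.hψ t).sub (((S₂.hψ (r * t + τ 0)).comp t (hρ t)).div_const r)
    refine h.congr_deriv ?_
    field_simp
  have havg : ∀ t, avg N T₁ (fun t => v₁ t - v₂ (r * t + τ 0)) t
      = avg N T₁ v₁ t - avg N T₂ v₂ (r * t + τ 0) := by
    intro t
    unfold avg
    rw [← mul_sub, ← Finset.sum_sub_distrib]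
    congr 1
    apply Finset.sum_congr rfl
    intro i _
    have hpt : r * (t - ((i : ℕ) : ℝ) * T₁ / N) + τ 0
        = r * t + τ 0 - ((i : ℕ) : ℝ) * T₂ / N := by
      rw [← hrT]
      ring
    simp only [hpt]
  have hclose := avg_close N hN T₁ (2 * Real.pi - 2 * Real.pi / r) (K4 * μ) hT₁ _ _ _ hF hh (by
    intro t
    have : r * (t + T₁) + τ 0 = (r * t + τ 0) + T₂ := by rw [← hrT]; ring
    simp only [this, S₁.run, S₂.run]
    ring) harρ
  have hRc : (2 * Real.pi - 2 * Real.pi / r) / T₁ = c₁ - c₂ := by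
    rw [hc₁, hc₂, ← hrT]; field_simp
  have hm2 : ∀ x y, |avg N T₂ v₂ x - avg N T₂ v₂ y| ≤ B * (T0 / N) * |x - y| := by
    apply lip _ _ _ (avg_hasDerivAt N T₂ v₂ a₂ S₂.hv)
    intro t
    have := avg_close N hN T₂ 0 B hT₂ v₂ a₂ j₂ S₂.hv S₂.ha (by simpa using S₂.per) S₂.jB t
    rw [zero_div, sub_zero] at this
    refine this.trans ?_
    have := S₂.TT0
    gcongr
  have hηle : η ≤ 1 / 3 * μ := by
    have h1 := hclose tη
    rw [havg, hRc] at h1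
    have h2 := hm2 (r * tη + τ 0) (τ tη)
    rw [abs_sub_comm (r * tη + τ 0)] at h2
    have e : (avg N T₁ v₁ tη - c₁) - (avg N T₂ v₂ (τ tη) - c₂)
      = (avg N T₁ v₁ tη - avg N T₂ v₂ (r * tη + τ 0) - (c₁ - c₂))
        + (avg N T₂ v₂ (r * tη + τ 0) - avg N T₂ v₂ (τ tη)) := by ring
    have h3 : K4 * μ * (T₁ / N) ≤ K4 * μ * (T0 / N) := by
      have := S₁.TT0
      gcongr
    have h4 : B * (T0 / N) * |τ tη - (r * tη + τ 0)| ≤ B * (T0 / N) * (K2 * μ) :=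
      mul_le_mul_of_nonneg_left (hδ tη) (by positivity)
    have h5 : K4 * μ * (T0 / N) + B * (T0 / N) * (K2 * μ)
        = (K4 * T0 + B * T0 * K2) / N * μ := by ring
    have h6 : (K4 * T0 + B * T0 * K2) / N ≤ 1 / 3 := by
      rw [div_le_iff₀ hN']; linarith
    have h7 := mul_le_mul_of_nonneg_right h6 hμ0
    rw [hη, e]
    refine (abs_add_le _ _).trans ?_
    linarith
  have hη2 : η ≤ |c₁ - c₂| / 2 := by rw [hμ] at hηle; linarith
  constructor
  · intro hlt
    have hcc : c₁ < c₂ := by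
      rw [hc₁, hc₂]
      exact div_lt_div_of_pos_left (by positivity) hT₂ hlt
    rw [abs_of_neg (by linarith)] at hη2
    have hpos : 0 < v₁ xm - v₂ (τ xm) := by
      have := (abs_le.1 (htη xm)).2
      rw [em]
      linarith
    have hPpos : ∀ t, v₂ (τ t) < v₁ t := by
      intro t
      have h1 := hxm t
      have h2 : 0 < v₁ xm ^ 2 - v₂ (τ xm) ^ 2 := by
        have : v₁ xm ^ 2 - v₂ (τ xm) ^ 2 = (v₁ xm + v₂ (τ xm)) * (v₁ xm - v₂ (τ xm)) := by ring
        rw [this]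
        exact mul_pos (by linarith [hv1p xm, hv2p (τ xm)]) hpos
      have h3 : v₂ (τ t) ^ 2 < v₁ t ^ 2 := by linarith
      exact lt_of_pow_lt_pow_left₀ 2 (hv1p t).le h3
    obtain ⟨z, hz, e⟩ := mvt _ _ hτd 0 (0 + T₁) (by linarith)
    rw [hτp] at e
    have h4 : 1 < v₁ z / v₂ (τ z) := by
      rw [lt_div_iff₀ (hv2p _), one_mul]; exact hPpos z
    nlinarith
  · intro hTT
    have hcc : c₁ = c₂ := by rw [hc₁, hc₂, hTT]
    rw [hcc, sub_self, abs_zero, zero_div] at hη2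
    have hμz : μ = 0 := by rw [hμ, hcc, sub_self, abs_zero]; linarith
    have hr1 : r = 1 := by rw [hr, hTT]; field_simp
    refine ⟨-τ 0, fun t => ?_⟩
    have h1 := hδ t
    rw [hμz, mul_zero, hr1] at h1
    have h2 := abs_eq_zero.1 (le_antisymm h1 (abs_nonneg _))
    rw [← hτ t]
    congr 1
    linarith

/-- **(Aronson–Huang, uniqueness of DRWs.)** For `β > 0` and `I > 1` there exists `N₀`
such that for every `N > N₀` the discrete rotating wave solution of the resistively
loaded `N`-junction array is unique up to permutation of the junction indices and time
shift: any two DRW waveforms `ψ, ψ̃` with periods `T, T̃` satisfy `T = T̃` and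
`ψ̃(t) = ψ(t − s)` for some `s`. -/
theorem aronson_huang_drw_unique (β I : ℝ) (hβ : 0 < β) (hI : 1 < I) :
    ∃ N₀ : ℕ, ∀ N : ℕ, N₀ < N →
      ∀ (ψ ψ' : ℝ → ℝ) (T T' : ℝ),
        IsDRWRes N β I ψ T → IsDRWRes N β I ψ' T' →
        T = T' ∧ ∃ s : ℝ, ∀ t : ℝ, ψ' t = ψ (t - s) := by
  set M := 2 * (I + 1) with hM
  set L := 4 * (I + 1) / β with hL
  set B := (L + M + L) / β with hB
  set c0 := (I - 1) / 2 with hc0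
  set T0 := 4 * Real.pi / (I - 1) with hT0
  have hMp : 0 < M := by rw [hM]; linarith
  have hLp : 0 < L := by rw [hL]; have : 0 < I + 1 := by linarith
                         positivity
  have hBp : 0 < B := by positivity
  have hc0p : 0 < c0 := by rw [hc0]; linarith
  have hT0p : 0 < T0 := by
    rw [hT0]; have : 0 < I - 1 := by linarith
    have := Real.pi_pos
    positivity
  set X := Real.exp ((1 + 1 / β) * T0) with hX
  have hX1 : 1 ≤ X := Real.one_le_exp (by positivity)
  set a0 := c0 / (3 * X) with ha0
  have ha0p : 0 < a0 := by positivity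
  have h1 : 6 * a0 ^ 2 * X ≤ c0 ^ 2 := by
    have : 6 * a0 ^ 2 * X = c0 ^ 2 * (6 / (9 * X)) := by
      rw [ha0]; field_simp; norm_num
    rw [this]
    have h6 : 6 / (9 * X) ≤ 1 := by rw [div_le_one (by positivity)]; linarith
    have := mul_le_mul_of_nonneg_left h6 (sq_nonneg c0)
    linarith
  set ε := min a0 (a0 ^ 3 / (3 * L * (M * T0)) / 2) with hε
  have hεp : 0 < ε := by
    rw [hε]; exact lt_min ha0p (by positivity)
  have h3 : 3 * L * (ε * M * T0) < a0 ^ 3 := by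
    have h4 : ε ≤ a0 ^ 3 / (3 * L * (M * T0)) / 2 := min_le_right _ _
    have h5 : ε < a0 ^ 3 / (3 * L * (M * T0)) := by
      have : 0 < a0 ^ 3 / (3 * L * (M * T0)) := by positivity
      linarith
    rw [lt_div_iff₀ (by positivity)] at h5
    linarith
  set K1 := M / a0 / a0 + 1 / c0 with hK1
  set K2 := K1 * T0 with hK2
  set K3 := ((M / a0 + L * K2) + M * K2 + (1 + L * K2)) / β with hK3
  set K4 := K3 + L * (1 / c0) with hK4
  obtain ⟨N₁, hN₁⟩ := exists_nat_ge (3 * (K4 * T0 + B * T0 * K2))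
  obtain ⟨N₂, hN₂⟩ := exists_nat_ge (L * T0 / ε)
  refine ⟨max N₁ N₂, ?_⟩
  intro N hN ψ ψ' T T' h h'
  have hN0 : 0 < N := by omega
  have hNr : (0 : ℝ) < N := by positivity
  have hNa : 3 * (K4 * T0 + B * T0 * K2) ≤ N := by
    refine hN₁.trans ?_
    exact_mod_cast (by omega : N₁ ≤ N)
  have hNb : L * (T0 / N) ≤ ε := by
    have : (N₂ : ℝ) ≤ N := by exact_mod_cast (by omega : N₂ ≤ N)
    have h5 := hN₂.trans this
    rw [div_le_iff₀ hεp] at h5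
    rw [← mul_div_assoc, div_le_iff₀ hNr]
    linarith
  obtain ⟨v, a, j, S⟩ := sol_of N hN0 β I hβ hI ψ T h
  obtain ⟨v', a', j', S'⟩ := sol_of N hN0 β I hβ hI ψ' T' h'
  have p := vpos N hN0 β I M L B c0 T0 ε a0 hβ hLp hMp hc0p ψ v a j T S hNb ha0p h1
    (min_le_left _ _) h3
  have p' := vpos N hN0 β I M L B c0 T0 ε a0 hβ hLp hMp hc0p ψ' v' a' j' T' S' hNb ha0p h1
    (min_le_left _ _) h3
  have C := drw_compare N hN0 β I M L B c0 T0 a0 hβ hLp hMp hc0p hBp ha0p K1 K2 K3 K4 hK1 hK2 hK3 hK4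
    hNa ψ v a j ψ' v' a' j' T T' S S' p p'
  have C' := drw_compare N hN0 β I M L B c0 T0 a0 hβ hLp hMp hc0p hBp ha0p K1 K2 K3 K4 hK1 hK2 hK3 hK4
    hNa ψ' v' a' j' ψ v a j T' T S' S p' p
  have hTT : T = T' := le_antisymm (not_lt.1 C.1) (not_lt.1 C'.1)
  exact ⟨hTT, C'.2 hTT.symm⟩
end
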